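/- For every integer n ≥ 1, the Wang shift Ω_n is minimal: every nonempty subset X ⊆ Ω_n that is closed in the product topology and invariant under the shift ℤ^2-action equals Ω_n. Moreover, Ω_n equals the substitutive subshift X_{ω_n}: Ω_n is exactly the set of configurations z : ℤ^2 → T_n all of whose finite rectangular subpatterns occur as a subpattern of ω_n^m(t) for some m ∈ ℕ and some t ∈ T_n. -/

import Mathlib

structure WangTile (C : Type*) where
  right : C
  top : C
  left : C
  bottom : C
deriving DecidableEq

abbrev Lbl : Type := ℤ × ℤ × ℤ

def Vn (n : ℤ) : Set Lbl :=
  {v | 0 ≤ v.1 ∧ v.1 ≤ v.2.1 ∧ v.2.1 ≤ 1 ∧ v.2.1 ≤ v.2.2 ∧ v.2.2 ≤ n + 1}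

def hatT {C : Type*} (t : WangTile C) : WangTile C :=
  ⟨t.top, t.right, t.bottom, t.left⟩

def whiteTiles (n : ℤ) : Set (WangTile Lbl) :=
  {t | ∃ i j : ℤ, 1 ≤ i ∧ i ≤ n ∧ 1 ≤ j ∧ j ≤ n ∧
    t = ⟨(1, 1, i + 1), (1, 1, j + 1), (1, 1, i), (1, 1, j)⟩}

def blueH (n : ℤ) : Set (WangTile Lbl) :=
  {t | ∃ i : ℤ, 0 ≤ i ∧ i ≤ n ∧ t = ⟨(0, 0, i + 1), (1, 1, 1), (0, 0, i), (1, 1, n)⟩}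

def greenH (n : ℤ) : Set (WangTile Lbl) :=
  {t | ∃ i : ℤ, 0 ≤ i ∧ i ≤ n ∧ t = ⟨(0, 1, i + 1), (1, 1, 1), (0, 0, i), (1, 1, n + 1)⟩}

def yellowH (n : ℤ) : Set (WangTile Lbl) :=
  {t | ∃ i : ℤ, 1 ≤ i ∧ i ≤ n ∧ t = ⟨(0, 1, i + 1), (1, 1, 2), (0, 1, i), (1, 1, n + 1)⟩}

def antiH (n : ℤ) : Set (WangTile Lbl) :=
  {t | ∃ i : ℤ, 1 ≤ i ∧ i ≤ n ∧ t = ⟨(0, 0, i + 1), (1, 1, 2), (0, 1, i), (1, 1, n)⟩}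

def junctionTile (n k l r s : ℤ) : WangTile Lbl :=
  ⟨(0, k, l), (0, r, s), (0, s, r + n), (0, l, k + n)⟩

def jPairs : Set (ℤ × ℤ) := {(0, 0), (0, 1), (1, 1)}

def junctions (n : ℤ) : Set (WangTile Lbl) :=
  {t | ∃ k l r s : ℤ, (k, l) ∈ jPairs ∧ (r, s) ∈ jPairs ∧ t = junctionTile n k l r s}

def Text (n : ℤ) : Set (WangTile Lbl) :=
  whiteTiles n ∪ blueH n ∪ greenH n ∪ yellowH n ∪ antiH n ∪
    hatT '' blueH n ∪ hatT '' greenH n ∪ hatT '' yellowH n ∪ hatT '' antiH n ∪ junctions n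

def Dset (n : ℤ) : Set (WangTile Lbl) :=
  {(⟨(0, 0, n + 1), (1, 1, 1), (0, 0, n), (1, 1, n)⟩ : WangTile Lbl),
    hatT (⟨(0, 0, n + 1), (1, 1, 1), (0, 0, n), (1, 1, n)⟩ : WangTile Lbl),
    junctionTile n 0 0 1 1, junctionTile n 1 1 0 0}

def Tmet (n : ℤ) : Set (WangTile Lbl) :=
  Text n \ (antiH n ∪ hatT '' antiH n ∪ Dset n)

def ValidConfig {C : Type*} (T : Set (WangTile C)) (x : ℤ × ℤ → WangTile C) : Prop :=
  (∀ m, x m ∈ T) ∧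
    (∀ m : ℤ × ℤ, (x m).right = (x (m.1 + 1, m.2)).left) ∧
    (∀ m : ℤ × ℤ, (x m).top = (x (m.1, m.2 + 1)).bottom)

def ValidPattern {C : Type*} (T : Set (WangTile C)) (w h : ℕ) (p : ℕ → ℕ → WangTile C) : Prop :=
  (∀ i j, i < w → j < h → p i j ∈ T) ∧
    (∀ i j, i + 1 < w → j < h → (p i j).right = (p (i + 1) j).left) ∧
    (∀ i j, i < w → j + 1 < h → (p i j).top = (p i (j + 1)).bottom)

def bottomWord {C : Type*} (w : ℕ) (p : ℕ → ℕ → WangTile C) : List C :=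
  (List.range w).map fun i => (p i 0).bottom

def topWord {C : Type*} (w h : ℕ) (p : ℕ → ℕ → WangTile C) : List C :=
  (List.range w).map fun i => (p i (h - 1)).top

def leftWord {C : Type*} (h : ℕ) (p : ℕ → ℕ → WangTile C) : List C :=
  (List.range h).map fun j => (p 0 j).left

def rightWord {C : Type*} (w h : ℕ) (p : ℕ → ℕ → WangTile C) : List C :=
  (List.range h).map fun j => (p (w - 1) j).right

def tau (n : ℤ) (v : Lbl) : List Lbl :=
  if v.1 = v.2.2 then
    (0, v.1 - v.2.1 + 1, n + 1) :: List.replicate (n - v.2.2).toNat (1, 1, n + 1)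
  else
    (0, v.1 - v.2.1 + 1, n) ::
      (List.replicate (v.2.2 - v.1 - 1).toNat (1, 1, n) ++
        List.replicate (n + 1 - v.2.2).toNat (1, 1, n + 1))

/-- `q` (of size `w' × h'`) is the image under `ω_n` of the pattern `p` (of size `w × h`)
over the tile set `T`: there are block boundaries `A`, `B` such that each block of `q`
is the unique valid rectangular pattern over `T` whose boundary words are the images
under `τ_n` of the labels of the corresponding tile of `p`. -/
def IsPatternImage (n : ℤ) (T : Set (WangTile Lbl)) (w h : ℕ)
    (p : ℕ → ℕ → WangTile Lbl) (w' h' : ℕ) (q : ℕ → ℕ → WangTile Lbl) : Prop :=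
  ∃ A B : ℕ → ℕ, A 0 = 0 ∧ B 0 = 0 ∧ A w = w' ∧ B h = h' ∧
    (∀ k, k < w → A k < A (k + 1)) ∧ (∀ k, k < h → B k < B (k + 1)) ∧
    ∀ l1 l2, l1 < w → l2 < h →
      ValidPattern T (A (l1 + 1) - A l1) (B (l2 + 1) - B l2)
        (fun i j => q (A l1 + i) (B l2 + j)) ∧
      rightWord (A (l1 + 1) - A l1) (B (l2 + 1) - B l2)
        (fun i j => q (A l1 + i) (B l2 + j)) = tau n (p l1 l2).right ∧
      topWord (A (l1 + 1) - A l1) (B (l2 + 1) - B l2)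
        (fun i j => q (A l1 + i) (B l2 + j)) = tau n (p l1 l2).top ∧
      leftWord (B (l2 + 1) - B l2) (fun i j => q (A l1 + i) (B l2 + j)) =
        tau n (p l1 l2).left ∧
      bottomWord (A (l1 + 1) - A l1) (fun i j => q (A l1 + i) (B l2 + j)) =
        tau n (p l1 l2).bottom

/-- `IterImage n T m a w h q` : `q` (of size `w × h`) is the pattern `ω_n^m(a)`. -/
def IterImage (n : ℤ) (T : Set (WangTile Lbl)) :
    ℕ → WangTile Lbl → ℕ → ℕ → (ℕ → ℕ → WangTile Lbl) → Prop
  | 0, a, w, h, q => w = 1 ∧ h = 1 ∧ q 0 0 = a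
  | m + 1, a, w, h, q =>
      ∃ (w' h' : ℕ) (p : ℕ → ℕ → WangTile Lbl),
        IterImage n T m a w' h' p ∧ IsPatternImage n T w' h' p w h q

instance : TopologicalSpace (WangTile Lbl) := ⊥

/-!
The first coordinate of the left labels of a valid configuration depends only on the row, and that
of the bottom labels only on the column. The rows and columns on which it vanishes recur with gaps
`n` and `n + 1` and cut the configuration into blocks, each the image under `ω_n` of the tile given
by its boundary labels. These tiles form a valid configuration again, so every configuration of
`Ω_n` desubstitutes arbitrarily often.

The image of a tile contains, in prescribed cells, tiles determined by the labels of the given tile;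
following them from the white tiles, which occur in every block of level two, shows that every tile
of `T_n` occurs in every block of some level. Moreover a tile of `T_n` is determined by its left and
bottom labels, so an iterated image of a tile determines not only its own block but also the row of
tiles above it and the column of tiles to its right, up to two corners. This upgrades the occurrence
of single tiles to that of `1 × 2`, `2 × 1` and `2 × 2` windows: desubstitute until the window is
smaller than the blocks, and induct on the shape of the window of blocks that it meets. A `2 × 2`
window of large enough blocks covers any finite window. Hence every finite pattern of every
configuration occurs in every block of some level, in any configuration, which gives both
minimality and one inclusion of `Ω_n = X_{ω_n}`. The other holds because `ω_n` preserves validity of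
patterns and validity of a configuration can be tested on its `2 × 2` windows.
-/

/-! ### Configurations over an arbitrary tile set -/

section Configurations

variable {C : Type*} {T : Set (WangTile C)} {x x' : ℤ × ℤ → WangTile C}

/-- The shifted configuration `σ^q x`. -/
def shiftConfig (q : ℤ × ℤ) (x : ℤ × ℤ → WangTile C) : ℤ × ℤ → WangTile C :=
  fun m => x (m.1 + q.1, m.2 + q.2)

/-- The reflection of a configuration in the diagonal. It exchanges rows and columns, so that
statements about columns transfer to rows. -/
def transposeConfig (x : ℤ × ℤ → WangTile C) : ℤ × ℤ → WangTile C := fun m => hatT (x m.swap)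

theorem ValidConfig.shift (hx : ValidConfig T x) (q : ℤ × ℤ) : ValidConfig T (shiftConfig q x) :=
  ⟨fun _ => hx.1 _,
    fun m => (hx.2.1 _).trans (congrArg (fun i => (x (i, m.2 + q.2)).left) (by ring)),
    fun m => (hx.2.2 _).trans (congrArg (fun j => (x (m.1 + q.1, j)).bottom) (by ring))⟩

theorem ValidConfig.transpose (hT : ∀ t ∈ T, hatT t ∈ T) (hx : ValidConfig T x) :
    ValidConfig T (transposeConfig x) :=
  ⟨fun _ => hT _ (hx.1 _), fun m => hx.2.2 m.swap, fun m => hx.2.1 m.swap⟩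

/-- A tile set in which a tile is determined by its left and bottom labels. -/
def SWDeterministic (T : Set (WangTile C)) : Prop :=
  ∀ ⦃s⦄, s ∈ T → ∀ ⦃t⦄, t ∈ T → s.left = t.left → s.bottom = t.bottom → s = t

theorem ValidConfig.eqOn_of_boundary (hT : SWDeterministic T) (hx : ValidConfig T x)
    (hx' : ValidConfig T x') {a a' b b' : ℤ}
    (hl : ∀ j, b ≤ j → j < b' → (x (a, j)).left = (x' (a, j)).left)
    (hb : ∀ i, a ≤ i → i < a' → (x (i, b)).bottom = (x' (i, b)).bottom) :
    Set.EqOn x x' (Set.Ico a a' ×ˢ Set.Ico b b') := by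
  have column (i : ℤ) (hi : a ≤ i) (hi' : i < a')
      (h : ∀ j, b ≤ j → j < b' → (x (i, j)).left = (x' (i, j)).left) (j : ℤ) (hj : b ≤ j) :
      j < b' → x (i, j) = x' (i, j) := by
    induction j, hj using Int.leInduction with
    | base => exact fun h' => hT (hx.1 _) (hx'.1 _) (h b le_rfl h') (hb i hi hi')
    | succ j hj ih =>
      refine fun h' => hT (hx.1 _) (hx'.1 _) (h _ (by omega) h') ?_
      exact (hx.2.2 (i, j)).symm.trans ((congrArg _ (ih (by omega))).trans (hx'.2.2 (i, j)))
  have left (i : ℤ) (hi : a ≤ i) : i < a' → ∀ j, b ≤ j → j < b' →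
      (x (i, j)).left = (x' (i, j)).left := by
    induction i, hi using Int.leInduction with
    | base => exact fun _ => hl
    | succ i hi ih =>
      intro h' j hj hj'
      have h := column i hi (by omega) (ih (by omega)) j hj hj'
      exact (hx.2.1 (i, j)).symm.trans ((congrArg _ h).trans (hx'.2.1 (i, j)))
  rintro ⟨i, j⟩ ⟨hi, hj⟩
  exact column i hi.1 hi.2 (left i hi.1 hi.2) j hj.1 hj.2

end Configurations

/-! ### Sequences of zeros and ones -/

section ZeroOne

theorem eq_of_add_one_eq {α : Type*} {f : ℤ → α} (h : ∀ i, f (i + 1) = f i) (i j : ℤ) :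
    f i = f j := by
  have key (i : ℤ) : f i = f 0 := by
    induction i using Int.induction_on with
    | zero => rfl
    | succ i ih => rw [h, ih]
    | pred i ih => rw [← ih, ← h (-i - 1), sub_add_cancel]
  rw [key, key j]

theorem exists_le_lt_of_strictMono {c : ℤ → ℤ} (hc : StrictMono c) (i : ℤ) :
    ∃ k, c k ≤ i ∧ i < c (k + 1) := by
  have growth (k l : ℤ) (h : k ≤ l) : l - k ≤ c l - c k := by
    induction l, h using Int.leInduction with
    | base => simp
    | succ l _ ih => have := hc (lt_add_one l); omega
  obtain ⟨k, hk, hmax⟩ := Int.exists_greatest_of_bdd (P := fun k => c k ≤ i)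
    ⟨max 0 (i - c 0), fun k hk => by by_contra! h; have := growth 0 k (by omega); omega⟩
    ⟨min 0 (i - c 0), by have := growth (min 0 (i - c 0)) 0 (min_le_left _ _); omega⟩
  exact ⟨k, hk, by by_contra! h; have := hmax _ h; omega⟩

/-- `a < b` are consecutive zeros of a sequence `f` with values in `{0, 1}`. -/
structure ConsecutiveZeros (f : ℤ → ℤ) (a b : ℤ) : Prop where
  lt : a < b
  left : f a = 0
  right : f b = 0
  between : ∀ i, a < i → i < b → f i = 1

theorem exists_strictMono_range_eq {Z : Set ℤ} (hlt : ∀ i, ∃ a ∈ Z, a < i)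
    (hgt : ∀ i, ∃ a ∈ Z, i < a) : ∃ c : ℤ → ℤ, StrictMono c ∧ Set.range c = Z := by
  classical
  let _ := LinearLocallyFiniteOrder.succOrder Z
  let _ := LinearLocallyFiniteOrder.predOrder Z
  have : Nonempty Z := let ⟨a, ha, _⟩ := hlt 0; ⟨⟨a, ha⟩⟩
  have : NoMaxOrder Z := ⟨fun i => let ⟨a, ha, h⟩ := hgt i; ⟨⟨a, ha⟩, h⟩⟩
  have : NoMinOrder Z := ⟨fun i => let ⟨a, ha, h⟩ := hlt i; ⟨⟨a, ha⟩, h⟩⟩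
  let e := (orderIsoIntOfLinearSuccPredArch (ι := Z)).symm
  refine ⟨fun k => e k, fun k l h => e.strictMono h, ?_⟩
  ext i
  exact ⟨fun ⟨k, hk⟩ => hk ▸ (e k).2, fun hi => ⟨e.symm ⟨i, hi⟩, by simp⟩⟩

theorem ConsecutiveZeros.of_range_eq {f c : ℤ → ℤ} (hf : ∀ i, f i = 0 ∨ f i = 1)
    (hc : StrictMono c) (hr : Set.range c = {i | f i = 0}) (k : ℤ) :
    ConsecutiveZeros f (c k) (c (k + 1)) := by
  have zero (k : ℤ) : f (c k) = 0 := hr.le ⟨k, rfl⟩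
  refine ⟨hc (lt_add_one k), zero k, zero _, fun i hi hi' => (hf i).resolve_left fun h => ?_⟩
  obtain ⟨m, rfl⟩ := hr.ge h
  have := hc.lt_iff_lt.1 hi
  have := hc.lt_iff_lt.1 hi'
  omega

/-- On the interval `(b, b']` the sequence `f` consists of `t` zeros followed by ones. -/
structure IsStep (f : ℤ → ℤ) (b b' t : ℤ) : Prop where
  nonneg : 0 ≤ t
  le : t ≤ b' - b
  eq : ∀ j, b < j → j ≤ b' → f j = if j ≤ b + t then 0 else 1

theorem exists_isStep {f : ℤ → ℤ} (hf : ∀ j, f j = 0 ∨ f j = 1) {b b' : ℤ} (h : b ≤ b')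
    (hm : ∀ j, b < j → j < b' → f j ≤ f (j + 1)) : ∃ t, IsStep f b b' t := by
  induction b', h using Int.leInduction with
  | base => exact ⟨0, le_rfl, by simp, by omega⟩
  | succ b' hb ih =>
    obtain ⟨t, ht0, ht, heq⟩ := ih fun j hj hj' => hm j hj (by omega)
    have last := hm b'
    have prev := heq b'
    rcases hf (b' + 1) with h1 | h1
    · have : t = b' - b := by split_ifs at prev <;> omega
      refine ⟨t + 1, by omega, by omega, fun j hj hj' => ?_⟩
      rcases hj'.lt_or_eq with hj' | rfl
      · rw [heq j hj (by omega), if_pos (by omega), if_pos (by omega)]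
      · rw [if_pos (by omega), h1]
    · refine ⟨t, ht0, by omega, fun j hj hj' => ?_⟩
      rcases hj'.lt_or_eq with hj' | rfl
      · exact heq j hj (by omega)
      · rw [if_neg (by omega), h1]

end ZeroOne

/-! ### The tiles -/

section Tiles

variable {n : ℤ} {t : WangTile Lbl}

/-- The white tile with left label `11i` and bottom label `11j`. -/
def whiteTile (i j : ℤ) : WangTile Lbl :=
  ⟨(1, 1, i + 1), (1, 1, j + 1), (1, 1, i), (1, 1, j)⟩

/-- The common form of the horizontal coloured tiles: blue, green, yellow and antigreen are the
cases `(y, e) = (0, 0)`, `(0, 1)`, `(1, 1)` and `(1, 0)`. -/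
def horizontalTile (n y e i : ℤ) : WangTile Lbl :=
  ⟨(0, e, i + 1), (1, 1, 1 + y), (0, y, i), (1, 1, n + e)⟩

/-- The tiles of `T'_n` in parametrized form. -/
inductive IsExtendedTile (n : ℤ) : WangTile Lbl → Prop
  | white {i j : ℤ} (hi : 1 ≤ i) (hin : i ≤ n) (hj : 1 ≤ j) (hjn : j ≤ n) :
      IsExtendedTile n (whiteTile i j)
  | horizontal {y e i : ℤ} (hy : 0 ≤ y) (hy1 : y ≤ 1) (he : 0 ≤ e) (he1 : e ≤ 1) (hyi : y ≤ i)
      (hin : i ≤ n) : IsExtendedTile n (horizontalTile n y e i)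
  | vertical {y e i : ℤ} (hy : 0 ≤ y) (hy1 : y ≤ 1) (he : 0 ≤ e) (he1 : e ≤ 1) (hyi : y ≤ i)
      (hin : i ≤ n) : IsExtendedTile n (hatT (horizontalTile n y e i))
  | junction {k l r s : ℤ} (hk : 0 ≤ k) (hkl : k ≤ l) (hl : l ≤ 1) (hr : 0 ≤ r) (hrs : r ≤ s)
      (hs : s ≤ 1) : IsExtendedTile n (junctionTile n k l r s)

/-- The tiles of `T_n` in parametrized form. -/
inductive IsMetallicTile (n : ℤ) : WangTile Lbl → Prop
  | white {i j : ℤ} (hi : 1 ≤ i) (hin : i ≤ n) (hj : 1 ≤ j) (hjn : j ≤ n) :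
      IsMetallicTile n (whiteTile i j)
  | horizontal {y e i : ℤ} (hy : 0 ≤ y) (hye : y ≤ e) (he : e ≤ 1) (hyi : y ≤ i) (hin : i ≤ n)
      (hie : i < n + e) : IsMetallicTile n (horizontalTile n y e i)
  | vertical {y e i : ℤ} (hy : 0 ≤ y) (hye : y ≤ e) (he : e ≤ 1) (hyi : y ≤ i) (hin : i ≤ n)
      (hie : i < n + e) : IsMetallicTile n (hatT (horizontalTile n y e i))
  | junction {k l r s : ℤ} (hk : 0 ≤ k) (hkl : k ≤ l) (hl : l ≤ 1) (hr : 0 ≤ r) (hrs : r ≤ s)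
      (hs : s ≤ 1) (hrl : r ≤ l) (hks : k ≤ s) : IsMetallicTile n (junctionTile n k l r s)

theorem mk_mem_jPairs {k l : ℤ} : (k, l) ∈ jPairs ↔ 0 ≤ k ∧ k ≤ l ∧ l ≤ 1 := by
  simp only [jPairs, Set.mem_insert_iff, Set.mem_singleton_iff, Prod.mk.injEq]
  omega

theorem mem_horizontal_iff :
    t ∈ blueH n ∪ greenH n ∪ yellowH n ∪ antiH n ↔
      ∃ y e i : ℤ, 0 ≤ y ∧ y ≤ 1 ∧ 0 ≤ e ∧ e ≤ 1 ∧ y ≤ i ∧ i ≤ n ∧ horizontalTile n y e i = t := by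
  constructor
  · rintro (((⟨i, hi, hin, rfl⟩ | ⟨i, hi, hin, rfl⟩) | ⟨i, hi, hin, rfl⟩) | ⟨i, hi, hin, rfl⟩)
    · exact ⟨0, 0, i, by simp [horizontalTile, hi, hin]⟩
    · exact ⟨0, 1, i, by simp [horizontalTile, hi, hin]⟩
    · exact ⟨1, 1, i, by simp [horizontalTile, hi, hin]⟩
    · exact ⟨1, 0, i, by simp [horizontalTile, hi, hin]⟩
  · rintro ⟨y, e, i, hy, hy1, he, he1, hyi, hin, rfl⟩
    obtain rfl | rfl : y = 0 ∨ y = 1 := by omega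
    all_goals obtain rfl | rfl : e = 0 ∨ e = 1 := by omega
    · exact Or.inl (Or.inl (Or.inl ⟨i, by simp [horizontalTile, hyi, hin]⟩))
    · exact Or.inl (Or.inl (Or.inr ⟨i, by simp [horizontalTile, hyi, hin]⟩))
    · exact Or.inr ⟨i, by simp [horizontalTile, hyi, hin]⟩
    · exact Or.inl (Or.inr ⟨i, by simp [horizontalTile, hyi, hin]⟩)

theorem Text_eq : Text n = whiteTiles n ∪ (blueH n ∪ greenH n ∪ yellowH n ∪ antiH n) ∪
    hatT '' (blueH n ∪ greenH n ∪ yellowH n ∪ antiH n) ∪ junctions n := by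
  simp only [Text, Set.image_union, Set.union_assoc]

theorem mem_Text_iff : t ∈ Text n ↔ IsExtendedTile n t := by
  rw [Text_eq]
  constructor
  · rintro (((⟨i, j, hi, hin, hj, hjn, rfl⟩ | h) | ⟨s, hs, rfl⟩) | ⟨k, l, r, s, hkl, hrs, rfl⟩)
    · exact .white hi hin hj hjn
    · obtain ⟨y, e, i, hy, hy1, he, he1, hyi, hin, rfl⟩ := mem_horizontal_iff.1 h
      exact .horizontal hy hy1 he he1 hyi hin
    · obtain ⟨y, e, i, hy, hy1, he, he1, hyi, hin, rfl⟩ := mem_horizontal_iff.1 hs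
      exact .vertical hy hy1 he he1 hyi hin
    · rw [mk_mem_jPairs] at hkl hrs
      exact .junction hkl.1 hkl.2.1 hkl.2.2 hrs.1 hrs.2.1 hrs.2.2
  · rintro (⟨hi, hin, hj, hjn⟩ | ⟨hy, hy1, he, he1, hyi, hin⟩ | ⟨hy, hy1, he, he1, hyi, hin⟩ |
      ⟨hk, hkl, hl, hr, hrs, hs⟩)
    · exact Or.inl (Or.inl (Or.inl ⟨_, _, hi, hin, hj, hjn, rfl⟩))
    · exact Or.inl (Or.inl (Or.inr
        (mem_horizontal_iff.2 ⟨_, _, _, hy, hy1, he, he1, hyi, hin, rfl⟩)))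
    · exact Or.inl (Or.inr
        ⟨_, mem_horizontal_iff.2 ⟨_, _, _, hy, hy1, he, he1, hyi, hin, rfl⟩, rfl⟩)
    · exact Or.inr ⟨_, _, _, _, mk_mem_jPairs.2 ⟨hk, hkl, hl⟩, mk_mem_jPairs.2 ⟨hr, hrs, hs⟩, rfl⟩

/-- The tiles of `T'_n` that do not belong to `T_n`. -/
def removedTiles (n : ℤ) : Set (WangTile Lbl) := antiH n ∪ hatT '' antiH n ∪ Dset n

theorem hatT_mem_removedTiles : hatT t ∈ removedTiles n ↔ t ∈ removedTiles n := by
  have key {t : WangTile Lbl} (h : t ∈ removedTiles n) : hatT t ∈ removedTiles n := by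
    rcases h with (h | ⟨s, hs, rfl⟩) | rfl | rfl | rfl | rfl
    · exact Or.inl (Or.inr ⟨t, h, rfl⟩)
    · exact Or.inl (Or.inl hs)
    all_goals simp [removedTiles, Dset, hatT, junctionTile]
  exact ⟨key, key⟩

theorem whiteTile_notMem_removedTiles {i j : ℤ} : whiteTile i j ∉ removedTiles n := by
  simp [removedTiles, antiH, Dset, whiteTile, hatT, junctionTile]

theorem horizontalTile_mem_removedTiles_iff {y e i : ℤ} (hy : 0 ≤ y) (hy1 : y ≤ 1) (he : 0 ≤ e)
    (he1 : e ≤ 1) (hyi : y ≤ i) (hin : i ≤ n) :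
    horizontalTile n y e i ∈ removedTiles n ↔ ¬ (y ≤ e ∧ i < n + e) := by
  simp only [removedTiles, antiH, hatT, Dset, junctionTile, zero_add, Set.union_insert,
    Set.union_singleton, horizontalTile, Set.mem_insert_iff, WangTile.mk.injEq, Prod.mk.injEq,
    add_left_inj, true_and, add_eq_left, zero_ne_one, add_eq_right, false_and, one_ne_zero,
    and_self, and_false, Set.mem_union, Set.mem_ofPred_eq, ↓existsAndEq, and_true, Set.mem_image,
    exists_const, or_false, false_or, not_and, not_lt]
  omega

theorem junctionTile_mem_removedTiles_iff {k l r s : ℤ} (hk : 0 ≤ k) (hkl : k ≤ l) (hl : l ≤ 1)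
    (hr : 0 ≤ r) (hrs : r ≤ s) (hs : s ≤ 1) :
    junctionTile n k l r s ∈ removedTiles n ↔ ¬ (r ≤ l ∧ k ≤ s) := by
  simp only [removedTiles, antiH, hatT, Dset, junctionTile, zero_add, Set.union_insert,
    Set.union_singleton, Set.mem_insert_iff, WangTile.mk.injEq, Prod.mk.injEq, true_and,
    zero_ne_one, false_and, add_eq_right, and_false, and_self, add_left_inj, Set.mem_union,
    Set.mem_ofPred_eq, exists_const, Set.mem_image, ↓existsAndEq, and_true, one_ne_zero,
    right_eq_add, or_self, or_false, false_or, not_and, not_le]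
  omega

theorem mem_Tmet_iff : t ∈ Tmet n ↔ IsMetallicTile n t := by
  change t ∈ Text n \ removedTiles n ↔ _
  rw [Set.mem_sdiff, mem_Text_iff]
  constructor
  · rintro ⟨⟨hi, hin, hj, hjn⟩ | ⟨hy, hy1, he, he1, hyi, hin⟩ | ⟨hy, hy1, he, he1, hyi, hin⟩ |
      ⟨hk, hkl, hl, hr, hrs, hs⟩, hd⟩
    · exact .white hi hin hj hjn
    · rw [horizontalTile_mem_removedTiles_iff hy hy1 he he1 hyi hin, not_not] at hd
      exact .horizontal hy hd.1 he1 hyi hin hd.2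
    · rw [hatT_mem_removedTiles, horizontalTile_mem_removedTiles_iff hy hy1 he he1 hyi hin,
        not_not] at hd
      exact .vertical hy hd.1 he1 hyi hin hd.2
    · rw [junctionTile_mem_removedTiles_iff hk hkl hl hr hrs hs, not_not] at hd
      exact .junction hk hkl hl hr hrs hs hd.1 hd.2
  · rintro (⟨hi, hin, hj, hjn⟩ | ⟨hy, hye, he, hyi, hin, hie⟩ | ⟨hy, hye, he, hyi, hin, hie⟩ |
      ⟨hk, hkl, hl, hr, hrs, hs, hrl, hks⟩)
    · exact ⟨.white hi hin hj hjn, whiteTile_notMem_removedTiles⟩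
    · refine ⟨.horizontal hy (hye.trans he) (hy.trans hye) he hyi hin, ?_⟩
      rw [horizontalTile_mem_removedTiles_iff] <;> omega
    · refine ⟨.vertical hy (hye.trans he) (hy.trans hye) he hyi hin, ?_⟩
      rw [hatT_mem_removedTiles, horizontalTile_mem_removedTiles_iff] <;> omega
    · refine ⟨.junction hk hkl hl hr hrs hs, ?_⟩
      rw [junctionTile_mem_removedTiles_iff] <;> omega

theorem hatT_mem_Tmet (h : t ∈ Tmet n) : hatT t ∈ Tmet n := by
  rw [mem_Tmet_iff] at h ⊢
  obtain ⟨hi, hin, hj, hjn⟩ | ⟨hy, hye, he, hyi, hin, hie⟩ | ⟨hy, hye, he, hyi, hin, hie⟩ |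
    ⟨hk, hkl, hl, hr, hrs, hs, hrl, hks⟩ := h
  · exact .white hj hjn hi hin
  · exact .vertical hy hye he hyi hin hie
  · exact .horizontal hy hye he hyi hin hie
  · exact .junction hr hrs hs hk hkl hl hks hrl

theorem swDeterministic_Tmet : SWDeterministic (Tmet n) := by
  intro s hs t ht hl hb
  rw [mem_Tmet_iff] at hs ht
  cases hs <;> cases ht <;>
    simp only [whiteTile, horizontalTile, hatT, junctionTile, WangTile.mk.injEq,
      Prod.mk.injEq, zero_ne_one, one_ne_zero, true_and, false_and] at hl hb ⊢ <;> omega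

theorem fst_eq_zero_or_one_of_mem_Text (h : t ∈ Text n) :
    (t.left.1 = 0 ∨ t.left.1 = 1) ∧ (t.bottom.1 = 0 ∨ t.bottom.1 = 1) := by
  obtain _ | _ | _ | _ := mem_Text_iff.1 h <;>
    simp [whiteTile, horizontalTile, hatT, junctionTile]

theorem right_fst_eq_and_top_fst_eq_of_mem_Text (h : t ∈ Text n) :
    t.right.1 = t.left.1 ∧ t.top.1 = t.bottom.1 := by
  obtain _ | _ | _ | _ := mem_Text_iff.1 h <;>
    simp [whiteTile, horizontalTile, hatT, junctionTile]

theorem Tmet_subset_Text : Tmet n ⊆ Text n := Set.sdiff_subset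

theorem exists_eq_whiteTile (h : t ∈ Tmet n) (hl : t.left.1 = 1) (hb : t.bottom.1 = 1) :
    ∃ i j, t = whiteTile i j := by
  obtain _ | _ | _ | _ := mem_Tmet_iff.1 h
  case white => exact ⟨_, _, rfl⟩
  all_goals simp [horizontalTile, hatT, junctionTile] at hl hb

theorem exists_eq_vertical (h : t ∈ Tmet n) (hl : t.left.1 = 1) (hb : t.bottom.1 = 0) :
    ∃ y e i, t = hatT (horizontalTile n y e i) := by
  obtain _ | _ | _ | _ := mem_Tmet_iff.1 h
  case vertical => exact ⟨_, _, _, rfl⟩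
  all_goals simp [whiteTile, horizontalTile, junctionTile] at hl hb

theorem exists_eq_junctionTile (h : t ∈ Tmet n) (hl : t.left.1 = 0) (hb : t.bottom.1 = 0) :
    ∃ k l r s, t = junctionTile n k l r s := by
  obtain _ | _ | _ | _ := mem_Tmet_iff.1 h
  case junction => exact ⟨_, _, _, _, rfl⟩
  all_goals simp [whiteTile, horizontalTile, hatT] at hl hb

theorem le_left_of_junction (h : t ∈ Tmet n) (hl : t.left.1 = 0) (hb : t.bottom.1 = 0) :
    n ≤ t.left.2.2 := by
  obtain _ | _ | _ | ⟨hk, hkl, hl, hr⟩ := mem_Tmet_iff.1 h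
  case junction => simpa [junctionTile] using hr
  all_goals simp [whiteTile, horizontalTile, hatT] at hl hb

theorem right_eq_of_junctions {s : WangTile Lbl} (hs : s ∈ Tmet n) (ht : t ∈ Tmet n)
    (hsl : s.left.1 = 0) (htl : t.left.1 = 0) (hsb : s.bottom.1 = 0) (h : s.bottom = t.bottom) :
    s.right = t.right := by
  obtain ⟨k, l, r, s, rfl⟩ := exists_eq_junctionTile hs hsl hsb
  obtain ⟨k', l', r', s', rfl⟩ := exists_eq_junctionTile ht htl (h ▸ hsb)
  simp only [junctionTile, Prod.mk.injEq, true_and] at h ⊢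
  omega

end Tiles

/-! ### The label grid of a valid configuration -/

/-- The arithmetic content of a valid configuration over `T'_n`: `γ i` and `ρ j` are the first
coordinates of the labels along column `i` and row `j`, while `l2 i j`, `l3 i j` and `b2 i j`,
`b3 i j` are the remaining coordinates of the left and bottom labels at `(i, j)`. -/
structure LabelGrid (n : ℤ) (γ ρ : ℤ → ℤ) (l2 l3 b2 b3 : ℤ → ℤ → ℤ) : Prop where
  col : ∀ i, γ i = 0 ∨ γ i = 1
  row : ∀ j, ρ j = 0 ∨ ρ j = 1
  white : ∀ i j, γ i = 1 → ρ j = 1 →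
    l2 i j = 1 ∧ b2 i j = 1 ∧ l2 (i + 1) j = 1 ∧ b2 i (j + 1) = 1 ∧
    l3 (i + 1) j = l3 i j + 1 ∧ b3 i (j + 1) = b3 i j + 1 ∧
    1 ≤ l3 i j ∧ l3 i j ≤ n ∧ 1 ≤ b3 i j ∧ b3 i j ≤ n
  horizontal : ∀ i j, γ i = 1 → ρ j = 0 →
    b2 i j = 1 ∧ b2 i (j + 1) = 1 ∧ l3 (i + 1) j = l3 i j + 1 ∧ b3 i j = n + l2 (i + 1) j ∧
    b3 i (j + 1) = 1 + l2 i j ∧ 0 ≤ l2 i j ∧ l2 i j ≤ 1 ∧ 0 ≤ l2 (i + 1) j ∧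
    l2 (i + 1) j ≤ 1 ∧ l2 i j ≤ l3 i j ∧ l3 i j ≤ n
  vertical : ∀ i j, γ i = 0 → ρ j = 1 →
    l2 i j = 1 ∧ l2 (i + 1) j = 1 ∧ b3 i (j + 1) = b3 i j + 1 ∧ l3 i j = n + b2 i (j + 1) ∧
    l3 (i + 1) j = 1 + b2 i j ∧ 0 ≤ b2 i j ∧ b2 i j ≤ 1 ∧ 0 ≤ b2 i (j + 1) ∧
    b2 i (j + 1) ≤ 1 ∧ b2 i j ≤ b3 i j ∧ b3 i j ≤ n
  junction : ∀ i j, γ i = 0 → ρ j = 0 →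
    l2 i j = b3 i (j + 1) ∧ l3 i j = b2 i (j + 1) + n ∧ b2 i j = l3 (i + 1) j ∧
    b3 i j = l2 (i + 1) j + n ∧ 0 ≤ l2 (i + 1) j ∧ l2 (i + 1) j ≤ l3 (i + 1) j ∧
    l3 (i + 1) j ≤ 1 ∧ 0 ≤ b2 i (j + 1) ∧ b2 i (j + 1) ≤ b3 i (j + 1) ∧ b3 i (j + 1) ≤ 1

namespace ValidConfig

variable {n : ℤ} {x : ℤ × ℤ → WangTile Lbl}

theorem left_fst_eq (hx : ValidConfig (Text n) x) (i i' j : ℤ) :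
    (x (i, j)).left.1 = (x (i', j)).left.1 :=
  eq_of_add_one_eq (f := fun i => (x (i, j)).left.1) (fun i => by
    rw [← (right_fst_eq_and_top_fst_eq_of_mem_Text (hx.1 (i, j))).1, hx.2.1 (i, j)]) i i'

theorem bottom_fst_eq (hx : ValidConfig (Text n) x) (i j j' : ℤ) :
    (x (i, j)).bottom.1 = (x (i, j')).bottom.1 :=
  eq_of_add_one_eq (f := fun j => (x (i, j)).bottom.1) (fun j => by
    rw [← (right_fst_eq_and_top_fst_eq_of_mem_Text (hx.1 (i, j))).2, hx.2.2 (i, j)]) j j'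

theorem labelGrid (hx : ValidConfig (Text n) x) :
    LabelGrid n (fun i => (x (i, 0)).bottom.1) (fun j => (x (0, j)).left.1)
      (fun i j => (x (i, j)).left.2.1) (fun i j => (x (i, j)).left.2.2)
      (fun i j => (x (i, j)).bottom.2.1) (fun i j => (x (i, j)).bottom.2.2) := by
  refine ⟨fun i => (fst_eq_zero_or_one_of_mem_Text (hx.1 _)).2,
    fun j => (fst_eq_zero_or_one_of_mem_Text (hx.1 _)).1, ?_, ?_, ?_, ?_⟩
  all_goals
    intro i j hi hj
    rw [hx.bottom_fst_eq i 0 j] at hi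
    rw [hx.left_fst_eq 0 i j] at hj
    rw [← hx.2.1 (i, j), ← hx.2.2 (i, j)]
    obtain ⟨t, ht⟩ : ∃ t, x (i, j) = t := ⟨_, rfl⟩
    have h := mem_Text_iff.1 (hx.1 (i, j))
    rw [ht] at h hi hj ⊢
    obtain _ | _ | _ | _ := h <;> grind [whiteTile, horizontalTile, hatT, junctionTile]

end ValidConfig

namespace LabelGrid

variable {n : ℤ} {γ ρ : ℤ → ℤ} {l2 l3 b2 b3 : ℤ → ℤ → ℤ} {a a' b i j : ℤ}

theorem swap (g : LabelGrid n γ ρ l2 l3 b2 b3) :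
    LabelGrid n ρ γ (fun i j => b2 j i) (fun i j => b3 j i) (fun i j => l2 j i)
      (fun i j => l3 j i) where
  col := g.row
  row := g.col
  white i j h h' := by have := g.white j i h' h; tauto
  horizontal i j h h' := g.vertical j i h' h
  vertical i j h h' := g.horizontal j i h' h
  junction i j h h' := by have := g.junction j i h' h; omega

theorem b2_mem (g : LabelGrid n γ ρ l2 l3 b2 b3) (i j : ℤ) : 0 ≤ b2 i j ∧ b2 i j ≤ 1 := by
  rcases g.col i with hi | hi <;> rcases g.row j with hj | hj
  · have := g.junction _ _ hi hj; omega
  · have := g.vertical _ _ hi hj; omega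
  · have := g.horizontal _ _ hi hj; omega
  · have := g.white _ _ hi hj; omega

theorem l3_mem (g : LabelGrid n γ ρ l2 l3 b2 b3) (hi : γ i = 1) : 0 ≤ l3 i j ∧ l3 i j ≤ n := by
  rcases g.row j with h | h
  · have := g.horizontal _ _ hi h; omega
  · have := g.white _ _ hi h; omega

theorem l3_eq_add (g : LabelGrid n γ ρ l2 l3 b2 b3) (h : a ≤ a')
    (hγ : ∀ i, a ≤ i → i < a' → γ i = 1) (j : ℤ) : l3 a' j = l3 a j + (a' - a) := by
  induction a', h using Int.leInduction with
  | base => simp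
  | succ i hi ih =>
    have hi1 := hγ i hi (by omega)
    have := ih fun i' h h' => hγ i' h (by omega)
    rcases g.row j with h | h
    · have := g.horizontal _ _ hi1 h; omega
    · have := g.white _ _ hi1 h; omega

theorem exists_col_eq_zero (hn : 1 ≤ n) (g : LabelGrid n γ ρ l2 l3 b2 b3) (i : ℤ) :
    ∃ a, i < a ∧ a ≤ i + n + 2 ∧ γ a = 0 := by
  by_contra! hc
  have one (a : ℤ) (h : i < a) (h' : a ≤ i + n + 2) : γ a = 1 :=
    (g.col a).resolve_left (hc a h h')
  have := g.l3_eq_add (a := i + 1) (a' := i + n + 2) (by omega)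
    (fun a h h' => one a (by omega) (by omega)) 0
  have := g.l3_mem (j := 0) (one (i + 1) (by omega) (by omega))
  have := g.l3_mem (j := 0) (one (i + n + 2) (by omega) (by omega))
  omega

theorem exists_enum_col (hn : 1 ≤ n) (g : LabelGrid n γ ρ l2 l3 b2 b3) :
    ∃ c : ℤ → ℤ, StrictMono c ∧ Set.range c = {i | γ i = 0} :=
  exists_strictMono_range_eq
    (fun i => let ⟨a, _, h, ha⟩ := g.exists_col_eq_zero hn (i - n - 3); ⟨a, ha, by omega⟩)
    (fun i => let ⟨a, h, _, ha⟩ := g.exists_col_eq_zero hn i; ⟨a, ha, h⟩)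

theorem exists_next_col (hn : 1 ≤ n) (g : LabelGrid n γ ρ l2 l3 b2 b3) (ha : γ a = 0) :
    ∃ b, ConsecutiveZeros γ a b := by
  obtain ⟨c, hc, hr⟩ := g.exists_enum_col hn
  obtain ⟨k, rfl⟩ := hr.ge ha
  exact ⟨_, .of_range_eq g.col hc hr k⟩

theorem exists_prev_col (hn : 1 ≤ n) (g : LabelGrid n γ ρ l2 l3 b2 b3) (hb : γ b = 0) :
    ∃ a, ConsecutiveZeros γ a b := by
  obtain ⟨c, hc, hr⟩ := g.exists_enum_col hn
  obtain ⟨k, rfl⟩ := hr.ge hb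
  exact ⟨c (k - 1), by simpa using ConsecutiveZeros.of_range_eq g.col hc hr (k - 1)⟩

theorem l2_eq_zero_of_rows (g : LabelGrid n γ ρ l2 l3 b2 b3) (hn : 1 ≤ n) (hρ : ∀ j, ρ j = 0)
    (ha : γ a = 0) (h : a + 1 ≤ i) (hγ : ∀ i', a < i' → i' < i → γ i' = 1) (j : ℤ) :
    l2 i j = 0 := by
  induction i, h using Int.leInduction generalizing j with
  | base =>
    have := g.junction a j ha (hρ j)
    have := g.junction a (j + 1) ha (hρ _)
    have := g.junction a (j - 1) ha (hρ _)
    rw [sub_add_cancel] at this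
    omega
  | succ i hi ih =>
    have := g.horizontal i j (hγ i (by omega) (by omega)) (hρ j)
    have := g.horizontal i (j - 1) (hγ i (by omega) (by omega)) (hρ _)
    have := ih (fun i' h h' => hγ i' h (by omega)) (j - 1)
    rw [sub_add_cancel] at *
    omega

/-- Otherwise a zero column would have `l2 = 1` on its left side, although `l2` vanishes to the
right of the previous zero column and this propagates. -/
theorem exists_row_eq_one (hn : 1 ≤ n) (g : LabelGrid n γ ρ l2 l3 b2 b3) : ∃ j, ρ j = 1 := by
  by_contra! hc
  have hρ (j : ℤ) : ρ j = 0 := (g.row j).resolve_right (hc j)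
  obtain ⟨a, -, -, ha⟩ := g.exists_col_eq_zero hn 0
  obtain ⟨b, h⟩ := g.exists_next_col hn ha
  have := g.l2_eq_zero_of_rows hn hρ ha h.lt h.between 0
  have := g.junction b 0 h.right (hρ 0)
  have := g.junction b (0 + 1) h.right (hρ _)
  have := g.junction b (0 - 1) h.right (hρ _)
  rw [sub_add_cancel] at this
  omega

theorem b2_add_eq_of_row_one (g : LabelGrid n γ ρ l2 l3 b2 b3) (h : ConsecutiveZeros γ a a')
    (hj : ρ j = 1) : b2 a j + (a' - a) = n + b2 a' (j + 1) := by
  have := g.l3_eq_add (a := a + 1) h.lt (fun i h1 h2 => h.between i h1 h2) j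
  have := g.vertical _ _ h.left hj
  have := g.vertical _ _ h.right hj
  omega

theorem b2_add_eq_of_row_zero (g : LabelGrid n γ ρ l2 l3 b2 b3) (h : ConsecutiveZeros γ a a')
    (hj : ρ j = 0) : b2 a j + (a' - a) = n + b2 a' (j + 1) + 1 := by
  have := g.l3_eq_add (a := a + 1) h.lt (fun i h1 h2 => h.between i h1 h2) j
  have := g.junction _ _ h.left hj
  have := g.junction _ _ h.right hj
  omega

theorem width_eq (hn : 1 ≤ n) (g : LabelGrid n γ ρ l2 l3 b2 b3) (h : ConsecutiveZeros γ a a') :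
    a' - a = n ∨ a' - a = n + 1 := by
  obtain ⟨j, hj⟩ := g.exists_row_eq_one hn
  obtain ⟨j', -, -, hj'⟩ := g.swap.exists_col_eq_zero hn 0
  have := g.b2_add_eq_of_row_one h hj
  have := g.b2_add_eq_of_row_zero h hj'
  have := g.b2_mem a j
  have := g.b2_mem a j'
  have := g.b2_mem a' (j + 1)
  have := g.b2_mem a' (j' + 1)
  omega

theorem exists_lt_of_antigreen (hn : 1 ≤ n) (g : LabelGrid n γ ρ l2 l3 b2 b3) (hi : γ i = 1)
    (hj : ρ j = 0) (h : l2 (i + 1) j < l2 i j) :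
    γ (i - 1) = 1 ∧ ∃ r, ρ r = 0 ∧ l2 i r < l2 (i - 1) r := by
  obtain ⟨r, hr⟩ := g.swap.exists_prev_col hn hj
  have := g.swap.width_eq hn hr
  have := g.swap.b2_add_eq_of_row_one hr hi
  have := g.swap.b2_mem r i
  have := g.swap.b2_mem j i
  have := g.swap.b2_mem j (i + 1)
  rcases g.col (i - 1) with hi' | hi'
  · have := g.swap.b2_add_eq_of_row_zero hr hi'
    have := g.swap.b2_mem r (i - 1)
    rw [sub_add_cancel] at *
    omega
  · have := g.swap.b2_add_eq_of_row_one hr hi'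
    rw [sub_add_cancel] at this
    exact ⟨hi', r, hr.left, by omega⟩

theorem l2_le_of_row_zero (hn : 1 ≤ n) (g : LabelGrid n γ ρ l2 l3 b2 b3) (hi : γ i = 1)
    (hj : ρ j = 0) : l2 i j ≤ l2 (i + 1) j := by
  by_contra! h
  have descent (m : ℤ) (hm : m ≤ i) : γ m = 1 ∧ ∃ r, ρ r = 0 ∧ l2 (m + 1) r < l2 m r := by
    induction m, hm using Int.leInductionDown with
    | base => exact ⟨hi, j, hj, h⟩
    | pred m _ ih =>
      obtain ⟨hm, r, hr, hlt⟩ := ih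
      simpa using g.exists_lt_of_antigreen hn hm hr hlt
  obtain ⟨a, -, ha', ha⟩ := g.exists_col_eq_zero hn (i - n - 2)
  have := (descent a (by omega)).1
  omega

theorem l3_lt_of_row_zero (g : LabelGrid n γ ρ l2 l3 b2 b3) (hi : γ i = 1) (hj : ρ j = 0) :
    l3 i j < n + l2 (i + 1) j := by
  have := g.horizontal _ _ hi hj
  rcases g.col (i + 1) with h | h
  · have := g.junction _ _ h hj; omega
  · have := g.horizontal _ _ h hj; omega

theorem b2_le_of_junction (hn : 1 ≤ n) (g : LabelGrid n γ ρ l2 l3 b2 b3) (hi : γ i = 0)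
    (hj : ρ j = 0) : b2 i (j + 1) ≤ b2 i j := by
  by_contra! hlt
  obtain ⟨a, ha⟩ := g.exists_next_col hn hi
  have hw := g.width_eq hn ha
  have h0 := g.b2_add_eq_of_row_zero ha hj
  have := g.b2_mem i j
  have := g.b2_mem i (j + 1)
  have := g.b2_mem a (j + 1)
  have := g.b2_mem a (j + 1 + 1)
  rcases g.row (j + 1) with h | h
  · have := g.swap.width_eq hn
      ⟨lt_add_one j, hj, h, fun _ h h' => absurd (Int.lt_add_one_iff.1 h') h.not_ge⟩
    have := g.b2_add_eq_of_row_zero ha h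
    obtain rfl : a = i + 1 + 1 := by omega
    have hi1 := ha.between (i + 1) (by omega) (by omega)
    have := g.horizontal _ _ hi1 hj
    have := g.horizontal _ _ hi1 h
    have := g.junction _ _ hi hj
    have := g.junction _ _ hi h
    have := g.junction _ _ ha.right h
    omega
  · have := g.b2_add_eq_of_row_one ha h
    omega

end LabelGrid

theorem ValidConfig.metallic_of_extended {n : ℤ} {x : ℤ × ℤ → WangTile Lbl} (hn : 1 ≤ n)
    (hx : ValidConfig (Text n) x) : ValidConfig (Tmet n) x := by
  refine ⟨fun ⟨i, j⟩ => mem_Tmet_iff.2 ?_, hx.2⟩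
  have g := hx.labelGrid
  have l2_le := g.l2_le_of_row_zero hn (i := i) (j := j)
  have b2_le := g.swap.l2_le_of_row_zero hn (i := j) (j := i)
  have l3_lt := g.l3_lt_of_row_zero (i := i) (j := j)
  have b3_lt := g.swap.l3_lt_of_row_zero (i := j) (j := i)
  have b2_junction := g.b2_le_of_junction hn (i := i) (j := j)
  have l2_junction := g.swap.b2_le_of_junction hn (i := j) (j := i)
  rw [hx.bottom_fst_eq i 0 j, hx.left_fst_eq 0 i j, ← hx.2.1 (i, j)] at l2_le l3_lt l2_junction
  rw [hx.bottom_fst_eq i 0 j, hx.left_fst_eq 0 i j, ← hx.2.2 (i, j)] at b2_le b3_lt b2_junction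
  have hm := mem_Text_iff.1 (hx.1 (i, j))
  generalize x (i, j) = t at *
  obtain ⟨hi, hin, hj, hjn⟩ | ⟨hy, hy1, he, he1, hyi, hin⟩ | ⟨hy, hy1, he, he1, hyi, hin⟩ |
    ⟨hk, hkl, hl, hr, hrs, hs⟩ := hm
  · exact .white hi hin hj hjn
  · exact .horizontal hy (l2_le rfl rfl) he1 hyi hin (l3_lt rfl rfl)
  · exact .vertical hy (b2_le rfl rfl) he1 hyi hin (b3_lt rfl rfl)
  · exact .junction hk hkl hl hr hrs hs (b2_junction rfl rfl) (l2_junction rfl rfl)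

/-! ### Desubstitution -/

namespace LabelGrid

variable {n : ℤ} {γ ρ : ℤ → ℤ} {l2 l3 b2 b3 : ℤ → ℤ → ℤ} {a a' b b' t t' : ℤ}

theorem exists_isStep (hn : 1 ≤ n) (g : LabelGrid n γ ρ l2 l3 b2 b3) (ha : γ a = 0)
    (hb : ConsecutiveZeros ρ b b') : ∃ t, IsStep (b2 a) b b' t :=
  _root_.exists_isStep (fun j => by have := g.b2_mem a j; omega) hb.lt.le
    fun _ h h' => g.swap.l2_le_of_row_zero hn (hb.between _ h h') ha

theorem one_sub_l2_le (g : LabelGrid n γ ρ l2 l3 b2 b3) (ha : γ a = 0)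
    (hb : ConsecutiveZeros ρ b b') (ht : IsStep (b2 a) b b' t) : 1 - l2 a b ≤ t := by
  have := g.junction a b ha hb.left
  have h := ht.eq (b + 1) (by omega) hb.lt
  have := ht.nonneg
  split_ifs at h <;> omega

theorem b2_add_eq_at_start (g : LabelGrid n γ ρ l2 l3 b2 b3) (ha : ConsecutiveZeros γ a a')
    (hb : ConsecutiveZeros ρ b b') (ht' : IsStep (b2 a') b b' t') :
    b2 a b + (a' - a) = n + (if 1 ≤ t' then 0 else 1) + 1 := by
  rw [g.b2_add_eq_of_row_zero ha hb.left, ht'.eq _ (lt_add_one b) hb.lt]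
  simp only [add_le_add_iff_left]

theorem ite_add_eq_of_between (g : LabelGrid n γ ρ l2 l3 b2 b3) (ha : ConsecutiveZeros γ a a')
    (hb : ConsecutiveZeros ρ b b') (ht : IsStep (b2 a) b b' t) (ht' : IsStep (b2 a') b b' t')
    {j : ℤ} (hj : 0 < j) (hj' : j < b' - b) :
    (if j ≤ t then 0 else 1) + (a' - a) = n + (if j + 1 ≤ t' then 0 else 1) := by
  have h := g.b2_add_eq_of_row_one ha (hb.between (b + j) (by omega) (by omega))
  rw [ht.eq _ (by omega) (by omega), ht'.eq _ (by omega) (by omega)] at h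
  simpa only [add_assoc, add_le_add_iff_left] using h

theorem ite_add_eq_at_end (g : LabelGrid n γ ρ l2 l3 b2 b3) (ha : ConsecutiveZeros γ a a')
    (hb : ConsecutiveZeros ρ b b') (ht : IsStep (b2 a) b b' t) :
    (if b' - b ≤ t then 0 else 1) + (a' - a) = n + b2 a' (b' + 1) + 1 := by
  have h := g.b2_add_eq_of_row_zero ha hb.right
  rw [ht.eq _ hb.lt le_rfl] at h
  simpa only [sub_le_iff_le_add'] using h

theorem step_of_narrow (g : LabelGrid n γ ρ l2 l3 b2 b3) (ha : ConsecutiveZeros γ a a')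
    (hb : ConsecutiveZeros ρ b b') (ht : IsStep (b2 a) b b' t) (ht' : IsStep (b2 a') b b' t')
    (hw : a' - a = n) : b2 a b = 1 ∧ t + 1 ≤ b' - b ∧ t' = t + 1 := by
  have hstart := g.b2_add_eq_at_start ha hb ht'
  have hend := g.ite_add_eq_at_end ha hb ht
  have hmid (j : ℤ) := g.ite_add_eq_of_between ha hb ht ht' (j := j)
  have := g.b2_mem a b
  have := g.b2_mem a' (b' + 1)
  have := ht.nonneg
  have := ht'.le
  -- A row where the two steps disagree can be taken to be `t` or `t + 1`.
  have hmid₁ := hmid t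
  have hmid₂ := hmid (t + 1)
  grind

theorem step_of_wide (g : LabelGrid n γ ρ l2 l3 b2 b3) (ha : ConsecutiveZeros γ a a')
    (hb : ConsecutiveZeros ρ b b') (ht : IsStep (b2 a) b b' t) (ht' : IsStep (b2 a') b b' t')
    (hw : a' - a = n + 1) : b' - b ≤ t + 1 ∧ t' = 1 - b2 a b := by
  have hstart := g.b2_add_eq_at_start ha hb ht'
  have hmid (j : ℤ) := g.ite_add_eq_of_between ha hb ht ht' (j := j)
  have := g.b2_mem a b
  have := ht.nonneg
  have := ht'.nonneg
  have := ht'.le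
  have hmid₁ := hmid (t + 1)
  have hmid₂ := hmid 1
  grind

theorem step_of_block (hn : 1 ≤ n) (g : LabelGrid n γ ρ l2 l3 b2 b3)
    (ha : ConsecutiveZeros γ a a') (hb : ConsecutiveZeros ρ b b') (ht : IsStep (b2 a) b b' t)
    (ht' : IsStep (b2 a') b b' t') :
    a' - a = n ∧ b2 a b = 1 ∧ t + 1 ≤ b' - b ∧ t' = t + 1 ∨
      a' - a = n + 1 ∧ b' - b ≤ t + 1 ∧ t' = 1 - b2 a b :=
  (g.width_eq hn ha).imp (fun hw => ⟨hw, g.step_of_narrow ha hb ht ht' hw⟩)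
    fun hw => ⟨hw, g.step_of_wide ha hb ht ht' hw⟩

end LabelGrid

/-- The label of a side of length `h` of a supertile, read off the labels of its cells: `e` is the
second coordinate of the first letter and `t` is the number of letters with third coordinate `n`. -/
def sideLabel (n h e t : ℤ) : Lbl := (n + 1 - h, n + 2 - h - e, n + 1 - h + t)

theorem mem_Text_of_sides {n w h e e' t t' f f' u u' : ℤ} (he : 0 ≤ e ∧ e ≤ 1)
    (he' : 0 ≤ e' ∧ e' ≤ 1) (ht : 0 ≤ t ∧ t ≤ h) (ht' : 0 ≤ t' ∧ t' ≤ w)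
    (hw : w = n ∧ e' = 1 ∧ t + 1 ≤ h ∧ u = t + 1 ∨ w = n + 1 ∧ h ≤ t + 1 ∧ u = 1 - e')
    (hh : h = n ∧ e = 1 ∧ t' + 1 ≤ w ∧ u' = t' + 1 ∨ h = n + 1 ∧ w ≤ t' + 1 ∧ u' = 1 - e)
    (hf : f = if w ≤ t' then 0 else 1) (hf' : f' = if h ≤ t then 0 else 1)
    (het : 1 - e ≤ t) (het' : 1 - e' ≤ t') (hfu : 1 - f ≤ u) (hfu' : 1 - f' ≤ u') :
    (⟨sideLabel n h f u, sideLabel n w f' u', sideLabel n h e t, sideLabel n w e' t'⟩ :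
      WangTile Lbl) ∈ Text n := by
  rw [mem_Text_iff]
  simp only [sideLabel]
  rcases hw with ⟨rfl, rfl, h3, rfl⟩ | ⟨rfl, h3, rfl⟩ <;>
    rcases hh with ⟨h4, rfl, h5, rfl⟩ | ⟨rfl, h5, rfl⟩
  · subst h4
    convert IsExtendedTile.white (n := h) (i := 1 + t) (j := 1 + t') (by omega) (by omega)
      (by omega) (by omega) using 1
    simp only [whiteTile, WangTile.mk.injEq, Prod.mk.injEq]
    grind
  · convert IsExtendedTile.horizontal (n := w) (y := 1 - e) (e := 1 - f) (i := t) (by omega)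
      (by omega) (by omega) (by grind) (by omega) (by omega) using 1
    simp only [horizontalTile, WangTile.mk.injEq, Prod.mk.injEq]
    grind
  · subst h4
    convert IsExtendedTile.vertical (n := h) (y := 1 - e') (e := 1 - f') (i := t') (by omega)
      (by omega) (by omega) (by grind) (by omega) (by omega) using 1
    simp only [horizontalTile, hatT, WangTile.mk.injEq, Prod.mk.injEq]
    grind
  · convert IsExtendedTile.junction (n := n) (k := 1 - f) (l := 1 - e') (r := 1 - f') (s := 1 - e)
      (by grind) (by grind) (by grind) (by grind) (by grind) (by grind) using 1
    simp only [junctionTile, WangTile.mk.injEq, Prod.mk.injEq]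
    grind

/-- The `j`-th letter of `tau n u`. -/
def letter (n : ℤ) (u : Lbl) (j : ℤ) : Lbl :=
  if j = 0 then (0, u.1 - u.2.1 + 1, if u.2.2 - u.1 ≤ 0 then n + 1 else n)
  else (1, 1, if u.2.2 - u.1 ≤ j then n + 1 else n)

theorem letter_sideLabel (n h e t j : ℤ) :
    letter n (sideLabel n h e t) j =
      (if j = 0 then 0 else 1, if j = 0 then e else 1, if t ≤ j then n + 1 else n) := by
  grind [letter, sideLabel]

/-- `x` is the image of `y` under the substitution `ω_n`, the block `ω_n (y (k, l))` having its
bottom left corner at `(c k, r l)`. The width `|τ_n v|` of a block is `n + 1 - v.1`. -/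
structure Desubstitution (n : ℤ) (x y : ℤ × ℤ → WangTile Lbl) (c r : ℤ → ℤ) : Prop where
  valid : ValidConfig (Tmet n) x
  valid' : ValidConfig (Tmet n) y
  col : ∀ k l, c (k + 1) = c k + (n + 1 - (y (k, l)).bottom.1)
  row : ∀ k l, r (l + 1) = r l + (n + 1 - (y (k, l)).left.1)
  left : ∀ k l j, 0 ≤ j → r l + j < r (l + 1) →
    (x (c k, r l + j)).left = letter n (y (k, l)).left j
  bottom : ∀ k l i, 0 ≤ i → c k + i < c (k + 1) →
    (x (c k + i, r l)).bottom = letter n (y (k, l)).bottom i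

namespace ValidConfig

variable {n : ℤ} {x : ℤ × ℤ → WangTile Lbl}

theorem mono {C : Type*} {S T : Set (WangTile C)} (h : S ⊆ T) {x : ℤ × ℤ → WangTile C}
    (hx : ValidConfig S x) : ValidConfig T x :=
  ⟨fun m => h (hx.1 m), hx.2⟩

theorem left_eq_letter (hx : ValidConfig (Text n) x) {a b b' t j : ℤ}
    (ha : (x (a, 0)).bottom.1 = 0) (hb : ConsecutiveZeros (fun j => (x (0, j)).left.1) b b')
    (ht : IsStep (fun j => (x (a, j)).bottom.2.1) b b' t) (hj : 0 ≤ j) (hj' : b + j < b') :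
    (x (a, b + j)).left = letter n (sideLabel n (b' - b) (x (a, b)).left.2.1 t) j := by
  have hfst := hx.left_fst_eq a 0 (b + j)
  have hstep := ht.eq (b + j + 1) (by omega) (by omega)
  simp only [add_assoc, add_le_add_iff_left] at hstep
  rw [letter_sideLabel]
  rcases hj.eq_or_lt with rfl | hj
  · have := hx.labelGrid.junction a b ha hb.left
    rw [add_zero] at *
    have := hb.left
    ext <;> grind
  · have h1 := hb.between (b + j) (by omega) hj'
    have := hx.labelGrid.vertical a (b + j) ha h1
    ext <;> grind

theorem exists_desubstitution (hn : 1 ≤ n) (hx : ValidConfig (Tmet n) x) :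
    ∃ y c r, Desubstitution n x y c r := by
  have hx' := hx.mono Tmet_subset_Text
  have hxt := (hx.transpose fun _ => hatT_mem_Tmet).mono Tmet_subset_Text
  have g := hx'.labelGrid
  obtain ⟨c, hc, hcr⟩ := g.exists_enum_col hn
  obtain ⟨r, hr, hrr⟩ := g.swap.exists_enum_col hn
  have hc (k : ℤ) := ConsecutiveZeros.of_range_eq g.col hc hcr k
  have hr (l : ℤ) := ConsecutiveZeros.of_range_eq g.row hr hrr l
  choose t ht using fun k l => g.exists_isStep hn (hc k).left (hr l)
  choose t' ht' using fun k l => g.swap.exists_isStep hn (hr l).left (hc k)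
  let leftSide k l := sideLabel n (r (l + 1) - r l) (x (c k, r l)).left.2.1 (t k l)
  let bottomSide k l := sideLabel n (c (k + 1) - c k) (x (c k, r l)).bottom.2.1 (t' k l)
  refine ⟨fun m => ⟨leftSide (m.1 + 1) m.2, bottomSide m.1 (m.2 + 1), leftSide m.1 m.2,
    bottomSide m.1 m.2⟩, c, r, hx, metallic_of_extended hn ⟨fun ⟨k, l⟩ => ?_, fun _ => rfl,
    fun _ => rfl⟩, fun _ _ => by simp only [bottomSide, sideLabel]; ring,
    fun _ _ => by simp only [leftSide, sideLabel]; ring,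
    fun k l j => hx'.left_eq_letter (hc k).left (hr l) (ht k l),
    fun k l i => hxt.left_eq_letter (hr l).left (hc k) (ht' k l)⟩
  have hbot := (ht' k l).eq _ (hc k).lt le_rfl
  have hleft := (ht k l).eq _ (hr l).lt le_rfl
  simp only [← sub_le_iff_le_add'] at hbot hleft
  exact mem_Text_of_sides (g.swap.b2_mem _ _) (g.b2_mem _ _) ⟨(ht k l).nonneg, (ht k l).le⟩
    ⟨(ht' k l).nonneg, (ht' k l).le⟩
    (g.step_of_block hn (hc k) (hr l) (ht k l) (ht (k + 1) l))
    (g.swap.step_of_block hn (hr l) (hc k) (ht' k l) (ht' k (l + 1))) hbot hleft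
    (g.one_sub_l2_le (hc k).left (hr l) (ht k l))
    (g.swap.one_sub_l2_le (hr l).left (hc k) (ht' k l))
    (g.one_sub_l2_le (hc (k + 1)).left (hr l) (ht (k + 1) l))
    (g.swap.one_sub_l2_le (hr (l + 1)).left (hc k) (ht' k (l + 1)))

end ValidConfig

namespace Desubstitution

variable {n : ℤ} {x y x' y' : ℤ × ℤ → WangTile Lbl} {c r c' r' : ℤ → ℤ} {k k' l l' : ℤ}

theorem transpose (D : Desubstitution n x y c r) :
    Desubstitution n (transposeConfig x) (transposeConfig y) r c where
  valid := D.valid.transpose fun _ => hatT_mem_Tmet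
  valid' := D.valid'.transpose fun _ => hatT_mem_Tmet
  col k l := D.row l k
  row k l := D.col l k
  left k l := D.bottom l k
  bottom k l := D.left l k

theorem shift (D : Desubstitution n x y c r) (p q : ℤ × ℤ) :
    Desubstitution n (shiftConfig p x) (shiftConfig q y) (fun k => c (k + q.1) - p.1)
      (fun l => r (l + q.2) - p.2) where
  valid := D.valid.shift p
  valid' := D.valid'.shift q
  col k l := by
    have := D.col (k + q.1) (l + q.2)
    simp only [shiftConfig, add_right_comm k]
    omega
  row k l := by
    have := D.row (k + q.1) (l + q.2)
    simp only [shiftConfig, add_right_comm l]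
    omega
  left k l j hj hj' := by
    have := D.left (k + q.1) (l + q.2) j hj (by rw [add_right_comm]; omega)
    simp only [shiftConfig] at this ⊢
    convert this using 3; grind
  bottom k l i hi hi' := by
    have := D.bottom (k + q.1) (l + q.2) i hi (by rw [add_right_comm]; omega)
    simp only [shiftConfig] at this ⊢
    convert this using 3; grind

theorem strictMono_col (hn : 1 ≤ n) (D : Desubstitution n x y c r) : StrictMono c :=
  strictMono_int_of_lt_succ fun k => by
    have := D.col k 0
    have := (fst_eq_zero_or_one_of_mem_Text (Tmet_subset_Text (D.valid'.1 (k, 0)))).2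
    omega

theorem strictMono_row (hn : 1 ≤ n) (D : Desubstitution n x y c r) : StrictMono r :=
  D.transpose.strictMono_col hn

theorem left_corner (hn : 1 ≤ n) (D : Desubstitution n x y c r) (k l : ℤ) :
    (x (c k, r l)).left = letter n (y (k, l)).left 0 := by
  simpa using D.left k l 0 le_rfl (by simpa using D.strictMono_row hn (lt_add_one l))

theorem bottom_corner (hn : 1 ≤ n) (D : Desubstitution n x y c r) (k l : ℤ) :
    (x (c k, r l)).bottom = letter n (y (k, l)).bottom 0 :=
  D.transpose.left_corner hn l k

theorem eqOn_col (D : Desubstitution n x y c r) (D' : Desubstitution n x' y' c' r')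
    (hc : c k = c' k) (hl : l < l') (h : Set.EqOn y y' (Set.Ico k k' ×ˢ Set.Ico l l')) :
    Set.EqOn c c' (Set.Icc k k') := by
  rintro i ⟨hi, hi'⟩
  induction i, hi using Int.leInduction with
  | base => exact hc
  | succ i hi ih =>
    rw [D.col i l, D'.col i l, ih (by omega), h ⟨⟨hi, by simpa using hi'⟩, le_rfl, hl⟩]

theorem eqOn_row (D : Desubstitution n x y c r) (D' : Desubstitution n x' y' c' r')
    (hr : r l = r' l) (hk : k < k') (h : Set.EqOn y y' (Set.Ico k k' ×ˢ Set.Ico l l')) :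
    Set.EqOn r r' (Set.Icc l l') :=
  D.transpose.eqOn_col D'.transpose hr hk fun _ hm => congrArg hatT (h hm.symm)

theorem left_eq_of_eqOn (hn : 1 ≤ n) (D : Desubstitution n x y c r)
    (D' : Desubstitution n x' y' c' r') (hc : c k = c' k) (hr : Set.EqOn r r' (Set.Icc l l'))
    (h : ∀ m, l ≤ m → m < l' → y (k, m) = y' (k, m)) {j : ℤ} (hj : r l ≤ j) (hj' : j < r l') :
    (x (c k, j)).left = (x' (c k, j)).left := by
  have hr_mono := D.strictMono_row hn
  obtain ⟨m, hm, hm'⟩ := exists_le_lt_of_strictMono hr_mono j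
  have hlm : l ≤ m := Int.lt_add_one_iff.1 (hr_mono.lt_iff_lt.1 (hj.trans_lt hm'))
  have hml : m < l' := hr_mono.lt_iff_lt.1 (hm.trans_lt hj')
  have h1 := D.left k m (j - r m) (by omega) (by omega)
  have h2 := D'.left k m (j - r m) (by omega)
    (by rw [← hr ⟨hlm, hml.le⟩, ← hr ⟨by omega, hml⟩]; omega)
  rw [← hc, ← hr ⟨hlm, hml.le⟩, ← h m hlm hml, ← h1] at h2
  simpa using h2.symm

theorem eqOn_image (hn : 1 ≤ n) (D : Desubstitution n x y c r)
    (D' : Desubstitution n x' y' c' r') (hc : Set.EqOn c c' (Set.Icc k k'))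
    (hr : Set.EqOn r r' (Set.Icc l l')) (hk : k ≤ k') (hl : l ≤ l')
    (h : Set.EqOn y y' (Set.Ico k k' ×ˢ Set.Ico l l')) :
    Set.EqOn x x' (Set.Ico (c k) (c k') ×ˢ Set.Ico (r l) (r l')) := by
  rcases hk.eq_or_lt with rfl | hk <;> rcases hl.eq_or_lt with rfl | hl
  iterate 3 simp
  exact D.valid.eqOn_of_boundary swDeterministic_Tmet D'.valid
    (fun j => D.left_eq_of_eqOn hn D' (hc ⟨le_rfl, hk.le⟩) hr
      fun m hm hm' => h ⟨⟨le_rfl, hk⟩, hm, hm'⟩)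
    fun i => D.transpose.left_eq_of_eqOn hn D'.transpose (hr ⟨le_rfl, hl.le⟩) hc
      fun m hm hm' => congrArg hatT (h ⟨⟨hm, hm'⟩, le_rfl, hl⟩)

theorem eqOn_image_shift (hn : 1 ≤ n) (D : Desubstitution n x y c r)
    (D' : Desubstitution n x' y' c' r') {p q : ℤ} (hp : 0 < p) (hq : 0 < q)
    (h : Set.EqOn (shiftConfig (k, l) y) (shiftConfig (k', l') y') (Set.Ico 0 p ×ˢ Set.Ico 0 q)) :
    Set.EqOn (fun i => c (i + k) - c k) (fun i => c' (i + k') - c' k') (Set.Icc 0 p) ∧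
      Set.EqOn (fun j => r (j + l) - r l) (fun j => r' (j + l') - r' l') (Set.Icc 0 q) ∧
      Set.EqOn (shiftConfig (c k, r l) x) (shiftConfig (c' k', r' l') x')
        (Set.Ico 0 (c (p + k) - c k) ×ˢ Set.Ico 0 (r (q + l) - r l)) := by
  have hD := D.shift (c k, r l) (k, l)
  have hD' := D'.shift (c' k', r' l') (k', l')
  have hcol := hD.eqOn_col hD' (by simp) hq h
  have hrow := hD.eqOn_row hD' (by simp) hp h
  exact ⟨hcol, hrow, by simpa using hD.eqOn_image hn hD' hcol hrow hp.le hq.le h⟩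

end Desubstitution

namespace ValidConfig

variable {n a a' b b' : ℤ} {x x' : ℤ × ℤ → WangTile Lbl}

theorem bottom_eq_of_eqOn {C : Type*} {T : Set (WangTile C)} {x x' : ℤ × ℤ → WangTile C}
    (hx : ValidConfig T x) (hx' : ValidConfig T x') (hb : b < b')
    (h : Set.EqOn x x' (Set.Ico a a' ×ˢ Set.Ico b b')) {i : ℤ} (hi : a ≤ i) (hi' : i < a') :
    (x (i, b')).bottom = (x' (i, b')).bottom := by
  have := congrArg WangTile.top (h (x := (i, b' - 1)) ⟨⟨hi, hi'⟩, Int.le_sub_one_of_lt hb, by simp⟩)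
  simpa [hx.2.2, hx'.2.2] using this

theorem right_eq_of_eqOn (hx : ValidConfig (Tmet n) x) (hx' : ValidConfig (Tmet n) x')
    (hb : b < b') (h : Set.EqOn x x' (Set.Ico a a' ×ˢ Set.Ico b b'))
    (hab : (x (a, b)).bottom.1 = 0) (hl : (x (a, b')).left.1 = 0) (hl' : (x' (a, b')).left.1 = 0)
    {i : ℤ} (hi : a ≤ i) (hi' : i < a') : (x (i, b')).right = (x' (i, b')).right := by
  have hbot {i : ℤ} := hx.bottom_eq_of_eqOn hx' hb h (i := i)
  induction i, hi using Int.leInduction with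
  | base =>
    refine right_eq_of_junctions (hx.1 _) (hx'.1 _) hl hl' ?_ (hbot le_rfl hi')
    rwa [(hx.mono Tmet_subset_Text).bottom_fst_eq a b' b]
  | succ i hi ih =>
    refine congrArg _ (swDeterministic_Tmet (hx.1 _) (hx'.1 _) ?_ (hbot (by omega) hi'))
    rw [← hx.2.1 (i, b'), ← hx'.2.1 (i, b'), ih (by omega)]

theorem eqOn_extension (hx : ValidConfig (Tmet n) x) (hx' : ValidConfig (Tmet n) x')
    (ha : a < a') (hb : b < b') (h : Set.EqOn x x' (Set.Ico a a' ×ˢ Set.Ico b b'))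
    (hab : (x (a, b)).left.1 = 0 ∧ (x (a, b)).bottom.1 = 0)
    (hl : (x (a, b')).left.1 = 0 ∧ (x' (a, b')).left.1 = 0)
    (hr : (x (a', b)).bottom.1 = 0 ∧ (x' (a', b)).bottom.1 = 0) :
    Set.EqOn x x' (Set.Icc a a' ×ˢ Set.Icc b b' \ {(a, b'), (a', b)}) := by
  have hT : ∀ t ∈ Tmet n, hatT t ∈ Tmet n := fun _ => hatT_mem_Tmet
  have ht : Set.EqOn (transposeConfig x) (transposeConfig x') (Set.Ico b b' ×ˢ Set.Ico a a') :=
    fun _ hm => congrArg hatT (h hm.symm)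
  have hbot {i : ℤ} := hx.bottom_eq_of_eqOn hx' hb h (i := i)
  have hleft {j : ℤ} : b ≤ j → j < b' → (x (a', j)).left = (x' (a', j)).left :=
    (hx.transpose hT).bottom_eq_of_eqOn (hx'.transpose hT) ha ht
  have hright {i : ℤ} := hx.right_eq_of_eqOn hx' hb h hab.2 hl.1 hl.2 (i := i)
  have htop {j : ℤ} : b ≤ j → j < b' → (x (a', j)).top = (x' (a', j)).top :=
    (hx.transpose hT).right_eq_of_eqOn (hx'.transpose hT) ha ht hab.1 hr.1 hr.2
  rintro ⟨i, j⟩ ⟨⟨hi, hj⟩, hij⟩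
  simp only [Set.mem_Icc, Set.mem_insert_iff, Set.mem_singleton_iff, Prod.mk.injEq] at hi hj hij
  have hside (hj : j = b') (hi : a < i) : (x (i, j)).left = (x' (i, j)).left := by
    have := hright (i := i - 1) (by omega) (by omega)
    simpa [hx.2.1, hx'.2.1, hj] using this
  have hside' (hi : i = a') (hj : b < j) : (x (i, j)).bottom = (x' (i, j)).bottom := by
    have := htop (j := j - 1) (by omega) (by omega)
    simpa [hx.2.2, hx'.2.2, hi] using this
  by_cases hia : i = a' <;> by_cases hjb : j = b'
  · exact swDeterministic_Tmet (hx.1 _) (hx'.1 _) (hside hjb (by omega)) (hside' hia (by omega))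
  · subst hia
    exact swDeterministic_Tmet (hx.1 _) (hx'.1 _) (hleft (by omega) (by omega))
      (hside' rfl (by omega))
  · subst hjb
    exact swDeterministic_Tmet (hx.1 _) (hx'.1 _) (hside rfl (by omega)) (hbot hi.1 (by omega))
  · exact h ⟨⟨hi.1, by omega⟩, hj.1, by omega⟩

end ValidConfig

/-- `x` is the image of `y` under `m` successive desubstitution steps; `c` and `r` send the
coordinates of a tile of `y` to those of the lower left corner of its image in `x`. -/
inductive IteratedDesubstitution (n : ℤ) : ℕ → (ℤ × ℤ → WangTile Lbl) → (ℤ × ℤ → WangTile Lbl) →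
    (ℤ → ℤ) → (ℤ → ℤ) → Prop
  | zero {x : ℤ × ℤ → WangTile Lbl} (hx : ValidConfig (Tmet n) x) :
    IteratedDesubstitution n 0 x x id id
  | succ {m : ℕ} {x y z : ℤ × ℤ → WangTile Lbl} {c r c' r' : ℤ → ℤ}
    (D : Desubstitution n x y c r) (I : IteratedDesubstitution n m y z c' r') :
    IteratedDesubstitution n (m + 1) x z (c ∘ c') (r ∘ r')

namespace IteratedDesubstitution

variable {n : ℤ} {m : ℕ} {x y z x' y' : ℤ × ℤ → WangTile Lbl} {c r c' r' : ℤ → ℤ} {k k' l l' : ℤ}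

theorem valid (I : IteratedDesubstitution n m x y c r) : ValidConfig (Tmet n) x := by
  cases I with
  | zero hx => exact hx
  | succ D _ => exact D.valid

theorem valid' (I : IteratedDesubstitution n m x y c r) : ValidConfig (Tmet n) y := by
  induction I with
  | zero hx => exact hx
  | succ _ _ ih => exact ih

theorem transpose (I : IteratedDesubstitution n m x y c r) :
    IteratedDesubstitution n m (transposeConfig x) (transposeConfig y) r c := by
  induction I with
  | zero hx => exact .zero (hx.transpose fun _ => hatT_mem_Tmet)
  | succ D _ ih => exact .succ D.transpose ih

theorem strictMono_col (hn : 1 ≤ n) (I : IteratedDesubstitution n m x y c r) : StrictMono c := by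
  induction I with
  | zero => exact strictMono_id
  | succ D _ ih => exact (D.strictMono_col hn).comp ih

theorem strictMono_row (hn : 1 ≤ n) (I : IteratedDesubstitution n m x y c r) : StrictMono r :=
  I.transpose.strictMono_col hn

theorem exists_split {a b : ℕ} (I : IteratedDesubstitution n (a + b) x z c r) :
    ∃ y c₁ r₁ c₂ r₂, IteratedDesubstitution n a x y c₁ r₁ ∧
      IteratedDesubstitution n b y z c₂ r₂ ∧ c = c₁ ∘ c₂ ∧ r = r₁ ∘ r₂ := by
  induction a generalizing x c r with
  | zero => exact ⟨x, id, id, c, r, .zero I.valid, by rwa [Nat.zero_add] at I, rfl, rfl⟩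
  | succ a ih =>
    rw [Nat.succ_add] at I
    obtain - | ⟨D, I⟩ := I
    obtain ⟨y, c₃, r₃, c₄, r₄, h, h', rfl, rfl⟩ := ih I
    exact ⟨y, _, _, c₄, r₄, .succ D h, h', rfl, rfl⟩

theorem eqOn_image (hn : 1 ≤ n) (I : IteratedDesubstitution n m x y c r)
    (I' : IteratedDesubstitution n m x' y' c' r') {p q : ℤ} (hp : 0 < p) (hq : 0 < q)
    (h : Set.EqOn (shiftConfig (k, l) y) (shiftConfig (k', l') y') (Set.Ico 0 p ×ˢ Set.Ico 0 q)) :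
    Set.EqOn (fun i => c (i + k) - c k) (fun i => c' (i + k') - c' k') (Set.Icc 0 p) ∧
      Set.EqOn (fun j => r (j + l) - r l) (fun j => r' (j + l') - r' l') (Set.Icc 0 q) ∧
      Set.EqOn (shiftConfig (c k, r l) x) (shiftConfig (c' k', r' l') x')
        (Set.Ico 0 (c (p + k) - c k) ×ˢ Set.Ico 0 (r (q + l) - r l)) := by
  induction I generalizing x' c' r' with
  | zero =>
    cases I'
    exact ⟨fun i _ => by simp, fun i _ => by simp, by simpa using h⟩
  | @succ m x y z c r c₁ r₁ D I ih =>
    obtain - | @⟨_, _, _, _, c', r', c₁', r₁', D', I'⟩ := I'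
    obtain ⟨hcol, hrow, hy⟩ := ih I' h
    have hmono := I.strictMono_col hn
    have hmono' := I.strictMono_row hn
    have hwidth : 0 < c₁ (p + k) - c₁ k := sub_pos.2 (hmono (by omega))
    have hheight : 0 < r₁ (q + l) - r₁ l := sub_pos.2 (hmono' (by omega))
    obtain ⟨hcol₁, hrow₁, hx⟩ := D.eqOn_image_shift hn D' hwidth hheight hy
    refine ⟨fun i hi => ?_, fun j hj => ?_, by simpa using hx⟩
    · have := hcol₁ (x := c₁ (i + k) - c₁ k)
        ⟨sub_nonneg.2 (hmono.monotone (by grind)), sub_le_sub_right (hmono.monotone (by grind)) _⟩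
      have := hcol hi
      grind
    · have := hrow₁ (x := r₁ (j + l) - r₁ l)
        ⟨sub_nonneg.2 (hmono'.monotone (by grind)), sub_le_sub_right (hmono'.monotone (by grind)) _⟩
      have := hrow hj
      grind

theorem left_corner (hn : 1 ≤ n) (hm : 1 ≤ m) (I : IteratedDesubstitution n m x y c r) (k l : ℤ) :
    (x (c k, r l)).left.1 = 0 := by
  cases I with
  | zero => omega
  | succ D _ => simp [D.left_corner hn, letter]

theorem bottom_corner (hn : 1 ≤ n) (hm : 1 ≤ m) (I : IteratedDesubstitution n m x y c r)
    (k l : ℤ) : (x (c k, r l)).bottom.1 = 0 :=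
  I.transpose.left_corner hn hm l k

theorem eqOn_image_tile (hn : 1 ≤ n) (I : IteratedDesubstitution n m x y c r)
    (I' : IteratedDesubstitution n m x' y' c' r') (h : y (k, l) = y' (k', l')) :
    c (k + 1) - c k = c' (k' + 1) - c' k' ∧ r (l + 1) - r l = r' (l' + 1) - r' l' ∧
      Set.EqOn (shiftConfig (c k, r l) x) (shiftConfig (c' k', r' l') x')
        (Set.Ico 0 (c (k + 1) - c k) ×ˢ Set.Ico 0 (r (l + 1) - r l)) := by
  obtain ⟨hcol, hrow, hx⟩ := I.eqOn_image hn I' (p := 1) (q := 1) one_pos one_pos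
    (k := k) (l := l) (k' := k') (l' := l') fun m hm => by
      obtain rfl : m = 0 := by ext <;> simp only [Prod.fst_zero, Prod.snd_zero] <;> grind
      simpa [shiftConfig] using h
  have hcol := hcol (x := 1) (by simp)
  have hrow := hrow (x := 1) (by simp)
  simp only [add_comm (1 : ℤ)] at hcol hrow hx
  exact ⟨hcol, hrow, hx⟩

theorem eqOn_image_closure (hn : 1 ≤ n) (hm : 1 ≤ m) (I : IteratedDesubstitution n m x y c r)
    (I' : IteratedDesubstitution n m x' y' c' r') (h : y (k, l) = y' (k', l')) :
    Set.EqOn (shiftConfig (c k, r l) x) (shiftConfig (c' k', r' l') x')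
      (Set.Icc 0 (c (k + 1) - c k) ×ˢ Set.Icc 0 (r (l + 1) - r l) \
        {(0, r (l + 1) - r l), (c (k + 1) - c k, 0)}) := by
  obtain ⟨hcol, hrow, hx⟩ := I.eqOn_image_tile hn I' h
  refine (I.valid.shift _).eqOn_extension (I'.valid.shift _)
    (sub_pos.2 (I.strictMono_col hn (lt_add_one k)))
    (sub_pos.2 (I.strictMono_row hn (lt_add_one l))) hx ?_ ⟨?_, ?_⟩ ⟨?_, ?_⟩
  · simp [shiftConfig, I.left_corner hn hm, I.bottom_corner hn hm]
  · simp [shiftConfig, I.left_corner hn hm]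
  · simp [hrow, shiftConfig, I'.left_corner hn hm]
  · simp [shiftConfig, I.bottom_corner hn hm]
  · simp [hcol, shiftConfig, I'.bottom_corner hn hm]

theorem exists_of_validConfig (hn : 1 ≤ n) (m : ℕ) (hx : ValidConfig (Tmet n) x) :
    ∃ y c r, IteratedDesubstitution n m x y c r := by
  induction m generalizing x with
  | zero => exact ⟨x, id, id, .zero hx⟩
  | succ m ih =>
    obtain ⟨y, c, r, D⟩ := hx.exists_desubstitution hn
    obtain ⟨z, c', r', I⟩ := ih D.valid'
    exact ⟨z, _, _, .succ D I⟩

theorem add_two_le_col (hn : 1 ≤ n) (I : IteratedDesubstitution n 2 x y c r) (k : ℤ) :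
    c k + 2 ≤ c (k + 1) := by
  obtain - | ⟨D, I⟩ := I
  rename_i _ c r c' r'
  have hcorner := I.bottom_corner hn le_rfl k 0
  have hcol := D.col (c' k) (r' 0)
  have hmono := (D.strictMono_col hn).monotone
    (Int.add_one_le_of_lt (I.strictMono_col hn (lt_add_one k)))
  simp only [Function.comp_apply]
  omega

theorem exists_forall_add_le_col (hn : 1 ≤ n) (N : ℕ) : ∃ m, ∀ x y c r,
    IteratedDesubstitution n m x y c r → ∀ k, c k + N < c (k + 1) := by
  induction N with
  | zero => exact ⟨0, fun x y c r I k => by simpa using I.strictMono_col hn (lt_add_one k)⟩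
  | succ N ih =>
    obtain ⟨m, hm⟩ := ih
    refine ⟨m + 2, fun x y c r I k => ?_⟩
    obtain ⟨_, c₁, r₁, c₂, r₂, I₁, I₂, rfl, rfl⟩ := I.exists_split
    have := hm _ _ _ _ I₁ (c₂ k)
    have := I₁.strictMono_col hn (lt_add_one (c₂ k + 1))
    have := (I₁.strictMono_col hn).monotone (I₂.add_two_le_col hn k)
    grind

end IteratedDesubstitution

/-! ### Every tile occurs in every large block -/

/-- The domain of the image of the tile at `(k, l)` under a desubstitution with coordinates `c`
and `r`. -/
def block (c r : ℤ → ℤ) (k l : ℤ) : Set (ℤ × ℤ) :=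
  Set.Ico (c k) (c (k + 1)) ×ˢ Set.Ico (r l) (r (l + 1))

theorem mem_block_comp {c r c' r' : ℤ → ℤ} (hc : StrictMono c) (hr : StrictMono r) {k l i j : ℤ}
    {p : ℤ × ℤ} (h : (i, j) ∈ block c' r' k l) (hp : p ∈ block c r i j) :
    p ∈ block (c ∘ c') (r ∘ r') k l :=
  ⟨⟨(hc.monotone h.1.1).trans hp.1.1, hp.1.2.trans_le (hc.monotone h.1.2)⟩,
    (hr.monotone h.2.1).trans hp.2.1, hp.2.2.trans_le (hr.monotone h.2.2)⟩

/-- A translate of the pattern `x` on `S` occurs in every block of some fixed level, whatever the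
configuration to which the block belongs. -/
def OccursInBlocks (n : ℤ) (x : ℤ × ℤ → WangTile Lbl) (S : Set (ℤ × ℤ)) : Prop :=
  ∃ m, ∀ x' y c r, IteratedDesubstitution n m x' y c r → ∀ k l,
    ∃ q : ℤ × ℤ, (∀ s ∈ S, s + q ∈ block c r k l) ∧ Set.EqOn (shiftConfig q x') x S

namespace OccursInBlocks

variable {n : ℤ} {x y : ℤ × ℤ → WangTile Lbl} {S W : Set (ℤ × ℤ)}

theorem transpose (h : OccursInBlocks n x S) :
    OccursInBlocks n (transposeConfig x) (Prod.swap ⁻¹' S) := by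
  obtain ⟨m, hm⟩ := h
  refine ⟨m, fun x' y c r I k l => ?_⟩
  obtain ⟨q, hq, hx⟩ := hm _ _ _ _ I.transpose l k
  exact ⟨q.swap, fun s hs => (hq _ hs).symm, fun s hs => congrArg hatT (hx hs)⟩

theorem exists_margin (hn : 1 ≤ n) (h : OccursInBlocks n x S) :
    ∃ m, ∀ x' y c r, IteratedDesubstitution n m x' y c r → ∀ k l,
      ∃ q : ℤ × ℤ, (∀ s ∈ S, (c k ≤ s.1 + q.1 ∧ s.1 + q.1 + 2 ≤ c (k + 1)) ∧
        r l ≤ s.2 + q.2 ∧ s.2 + q.2 + 2 ≤ r (l + 1)) ∧ Set.EqOn (shiftConfig q x') x S := by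
  obtain ⟨m, hm⟩ := h
  refine ⟨m + 2, fun x' y c r I k l => ?_⟩
  obtain ⟨_, c₁, r₁, c₂, r₂, I₁, I₂, rfl, rfl⟩ := I.exists_split
  obtain ⟨q, hq, hx⟩ := hm _ _ _ _ I₁ (c₂ k) (r₂ l)
  refine ⟨q, fun s hs => ?_, hx⟩
  obtain ⟨⟨h₁, h₂⟩, h₃, h₄⟩ := hq s hs
  have := I₁.strictMono_col hn (lt_add_one (c₂ k + 1))
  have := I₁.strictMono_row hn (lt_add_one (r₂ l + 1))
  have := (I₁.strictMono_col hn).monotone (I₂.add_two_le_col hn k)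
  have := (I₁.strictMono_row hn).monotone (I₂.transpose.add_two_le_col hn l)
  grind [Prod.fst_add, Prod.snd_add]

theorem of_image {a : ℕ} (hn : 1 ≤ n) (h : OccursInBlocks n y W)
    (hWS : ∀ x' y' c r, IteratedDesubstitution n a x' y' c r → ∀ p,
      Set.EqOn (shiftConfig p y') y W → ∃ q : ℤ × ℤ, (∀ s ∈ S, ∃ w ∈ W,
        s + q ∈ Set.Ico (c (w.1 + p.1)) (c (w.1 + p.1 + 2)) ×ˢ
          Set.Ico (r (w.2 + p.2)) (r (w.2 + p.2 + 2))) ∧ Set.EqOn (shiftConfig q x') x S) :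
    OccursInBlocks n x S := by
  obtain ⟨m, hm⟩ := h.exists_margin hn
  refine ⟨a + m, fun x' z c r I k l => ?_⟩
  obtain ⟨y', c₁, r₁, c₂, r₂, I₁, I₂, rfl, rfl⟩ := I.exists_split
  obtain ⟨p, hp, hy⟩ := hm _ _ _ _ I₂ k l
  obtain ⟨q, hq, hx⟩ := hWS _ _ _ _ I₁ p hy
  refine ⟨q, fun s hs => ?_, hx⟩
  obtain ⟨w, hw, h₁, h₂⟩ := hq s hs
  obtain ⟨⟨h₃, h₄⟩, h₅, h₆⟩ := hp w hw
  have hc := (I₁.strictMono_col hn).monotone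
  have hr := (I₁.strictMono_row hn).monotone
  exact ⟨⟨(hc h₃).trans h₁.1, h₁.2.trans_le (hc h₄)⟩, (hr h₅).trans h₂.1, h₂.2.trans_le (hr h₆)⟩

end OccursInBlocks

/-- The indicator that the letter of index `j` of `τ_n(u)` ends in `n + 1` rather than `n`. -/
def longBit (u : Lbl) (j : ℤ) : ℤ :=
  if u.2.2 - u.1 ≤ j then 1 else 0

theorem letter_eq_longBit (n : ℤ) (u : Lbl) (j : ℤ) :
    letter n u j =
      (if j = 0 then 0 else 1, if j = 0 then u.1 - u.2.1 + 1 else 1, longBit u j + n) := by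
  grind [letter, longBit]

namespace Desubstitution

variable {n : ℤ} {x y : ℤ × ℤ → WangTile Lbl} {c r : ℤ → ℤ} {k l : ℤ}

theorem corner_mem_block (hn : 1 ≤ n) (D : Desubstitution n x y c r) (k l : ℤ) :
    (c k, r l) ∈ block c r k l :=
  ⟨⟨le_rfl, D.strictMono_col hn (lt_add_one k)⟩, le_rfl, D.strictMono_row hn (lt_add_one l)⟩

theorem bottom_fst_eq (D : Desubstitution n x y c r) {i : ℤ} (hi : 0 ≤ i)
    (hi' : c k + i < c (k + 1)) (j : ℤ) :
    (x (c k + i, j)).bottom.1 = if i = 0 then 0 else 1 := by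
  rw [(D.valid.mono Tmet_subset_Text).bottom_fst_eq _ j (r 0), D.bottom k 0 i hi hi',
    letter_eq_longBit]

theorem corner_eq (hn : 1 ≤ n) (D : Desubstitution n x y c r) (k l : ℤ) :
    x (c k, r l) = junctionTile n (longBit (y (k, l)).bottom 0)
      ((y (k, l)).bottom.1 - (y (k, l)).bottom.2.1 + 1) (longBit (y (k, l)).left 0)
      ((y (k, l)).left.1 - (y (k, l)).left.2.1 + 1) := by
  have hl := D.left_corner hn k l
  have hb := D.bottom_corner hn k l
  rw [letter_eq_longBit] at hl hb
  obtain ⟨k', l', r', s', h⟩ := exists_eq_junctionTile (D.valid.1 (c k, r l)) (by simp [hl])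
    (by simp [hb])
  rw [h] at hl hb ⊢
  grind [junctionTile]

theorem left_col_eq (hn : 1 ≤ n) (D : Desubstitution n x y c r) (k l : ℤ) {j : ℤ} (hj : 1 ≤ j)
    (hj' : r l + j < r (l + 1)) :
    x (c k, r l + j) = hatT (horizontalTile n (longBit (y (k, l)).left (j - 1))
      (longBit (y (k, l)).left j) ((y (k, l)).left.1 - (y (k, l)).left.2.1 + j)) := by
  have vertical {j : ℤ} (hj : 1 ≤ j) (hj' : r l + j < r (l + 1)) :
      ∃ y' i, x (c k, r l + j) = hatT (horizontalTile n y' (longBit (y (k, l)).left j) i) := by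
    have hl := D.left k l j (by omega) hj'
    have hb := D.bottom_fst_eq (k := k) le_rfl
      (by simpa using D.strictMono_col hn (lt_add_one k)) (r l + j)
    rw [letter_eq_longBit] at hl
    rw [add_zero] at hb
    obtain ⟨y', e, i, h⟩ := exists_eq_vertical (D.valid.1 (c k, r l + j)) (by grind)
      (by simpa using hb)
    rw [h] at hl ⊢
    grind [hatT, horizontalTile]
  induction j, hj using Int.leInduction with
  | base =>
    have hb := D.valid.2.2 (c k, r l)
    rw [D.corner_eq hn] at hb
    obtain ⟨y', i, h⟩ := vertical le_rfl hj'
    grind [hatT, horizontalTile, junctionTile]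
  | succ j hj ih =>
    have hb := D.valid.2.2 (c k, r l + j)
    obtain ⟨y', i, h⟩ := vertical (by omega) hj'
    rw [ih (by omega)] at hb
    grind [hatT, horizontalTile]

theorem left_eq_of_junction (hn : 1 ≤ n) (D : Desubstitution n x y c r)
    (hl : (y (k, l)).left.1 = 0) (hb : (y (k, l)).bottom.1 = 0) {i j : ℤ} (hi : 1 ≤ i)
    (hi' : i ≤ n) (hj : 1 ≤ j) (hj' : j ≤ n) :
    (x (c k + i, r l + j)).left = (1, 1, i) := by
  have hw := D.col k l
  have hh := D.row k l
  induction i, hi using Int.leInduction with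
  | base =>
    have h := D.left_col_eq hn k l hj (by omega)
    have hs := D.valid.2.1 (c k, r l + j)
    have := le_left_of_junction (D.valid'.1 (k, l)) hl hb
    rw [h] at hs
    grind [hatT, horizontalTile, longBit]
  | succ i hi ih =>
    have hs := D.valid.2.1 (c k + i, r l + j)
    have hbot := D.bottom_fst_eq (k := k) (i := i) (by omega) (by omega) (r l + j)
    obtain ⟨i', j', h⟩ := exists_eq_whiteTile (D.valid.1 (c k + i, r l + j))
      (by rw [ih (by omega)]) (by rw [hbot]; grind)
    have := ih (by omega)
    rw [h] at hs this
    grind [whiteTile]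

theorem eq_whiteTile_of_junction (hn : 1 ≤ n) (D : Desubstitution n x y c r)
    (hl : (y (k, l)).left.1 = 0) (hb : (y (k, l)).bottom.1 = 0) {i j : ℤ} (hi : 1 ≤ i)
    (hi' : i ≤ n) (hj : 1 ≤ j) (hj' : j ≤ n) : x (c k + i, r l + j) = whiteTile i j := by
  have hleft := D.left_eq_of_junction hn hl hb hi hi' hj hj'
  have hbottom : (x (c k + i, r l + j)).bottom = (1, 1, j) :=
    D.transpose.left_eq_of_junction hn hb hl hj hj' hi hi'
  obtain ⟨i', j', h⟩ := exists_eq_whiteTile (D.valid.1 (c k + i, r l + j)) (by rw [hleft])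
    (by rw [hbottom])
  rw [h] at hleft hbottom ⊢
  grind [whiteTile]

end Desubstitution

/-- The tile `t` occurs in every block of some fixed level. -/
def TileOccursInBlocks (n : ℤ) (t : WangTile Lbl) : Prop :=
  OccursInBlocks n (fun _ => t) {0}

namespace TileOccursInBlocks

variable {n : ℤ} {s t : WangTile Lbl}

theorem transpose (h : TileOccursInBlocks n t) : TileOccursInBlocks n (hatT t) := by
  have hzero : Prod.swap ⁻¹' {(0 : ℤ × ℤ)} = {0} := by ext; simp [Prod.ext_iff, and_comm]
  have := OccursInBlocks.transpose h
  rwa [hzero] at this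

theorem of_image (hn : 1 ≤ n) (hs : TileOccursInBlocks n s)
    (h : ∀ x y c r, Desubstitution n x y c r → ∀ k l, y (k, l) = s → ∃ p ∈ block c r k l, x p = t) :
    TileOccursInBlocks n t := by
  refine OccursInBlocks.of_image (a := 1) hn hs fun x y c r I p hp => ?_
  obtain - | ⟨D, - | _⟩ := I
  obtain ⟨q, ⟨hc, hr⟩, rfl⟩ := h _ _ _ _ D p.1 p.2 (by simpa [shiftConfig] using hp)
  have := D.strictMono_col hn (lt_add_one (p.1 + 1))
  have := D.strictMono_row hn (lt_add_one (p.2 + 1))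
  refine ⟨q, ?_, by simp [shiftConfig]⟩
  simp only [Set.mem_singleton_iff, forall_eq, exists_eq_left, Prod.fst_zero, Prod.snd_zero,
    zero_add, Function.comp_id]
  exact ⟨⟨hc.1, by grind⟩, hr.1, by grind⟩

theorem corner (hn : 1 ≤ n) (hs : TileOccursInBlocks n s) {k l r r' : ℤ}
    (hk : longBit s.bottom 0 = k) (hl : s.bottom.1 - s.bottom.2.1 + 1 = l)
    (hr : longBit s.left 0 = r) (hr' : s.left.1 - s.left.2.1 + 1 = r') :
    TileOccursInBlocks n (junctionTile n k l r r') :=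
  hs.of_image hn fun _ _ c r D k l h => ⟨(c k, r l), D.corner_mem_block hn k l, by
    rw [D.corner_eq hn, h, hk, hl, hr, hr']⟩

theorem left_col (hn : 1 ≤ n) (hs : TileOccursInBlocks n s) {y e i : ℤ} (j : ℤ) (hj : 1 ≤ j)
    (hjs : j + s.left.1 ≤ n) (hy : longBit s.left (j - 1) = y) (he : longBit s.left j = e)
    (hi : s.left.1 - s.left.2.1 + j = i) : TileOccursInBlocks n (hatT (horizontalTile n y e i)) :=
  hs.of_image hn fun _ _ c r D k l h => by
    have hrow := D.row k l
    rw [h] at hrow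
    exact ⟨(c k, r l + j), ⟨(D.corner_mem_block hn k l).1, by omega, by omega⟩, by
      rw [D.left_col_eq hn k l hj (by omega), h, hy, he, hi]⟩

theorem white (hn : 1 ≤ n) {i j : ℤ} (hi : 1 ≤ i) (hi' : i ≤ n) (hj : 1 ≤ j) (hj' : j ≤ n) :
    TileOccursInBlocks n (whiteTile i j) := by
  refine ⟨2, fun x z c r I k l => ?_⟩
  obtain - | @⟨_, _, y, _, c, r, _, _, D, - | @⟨_, _, _, _, c', r', _, _, D', - | _⟩⟩ := I
  have hl := D'.left_corner hn k l
  have hb := D'.bottom_corner hn k l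
  rw [letter_eq_longBit] at hl hb
  have hw := D.col (c' k) (r' l)
  have hh := D.row (c' k) (r' l)
  refine ⟨(c (c' k) + i, r (r' l) + j), ?_, ?_⟩
  · simp only [Set.mem_singleton_iff, forall_eq, zero_add]
    exact mem_block_comp (D.strictMono_col hn) (D.strictMono_row hn) (D'.corner_mem_block hn k l)
      ⟨⟨by omega, by grind⟩, by omega, by grind⟩
  · simpa [shiftConfig] using
      D.eq_whiteTile_of_junction hn (by simp [hl]) (by simp [hb]) hi hi' hj hj'

theorem junction_one_one (hn : 1 ≤ n) : TileOccursInBlocks n (junctionTile n 1 1 1 1) := by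
  refine (white hn le_rfl hn le_rfl hn).corner hn ?_ ?_ ?_ ?_ <;> simp [longBit, whiteTile]

theorem blue (hn : 1 ≤ n) {i : ℤ} (hi : 0 ≤ i) (hin : i < n) :
    TileOccursInBlocks n (hatT (horizontalTile n 0 0 i)) := by
  refine (junction_one_one hn).left_col hn (i + 1) (by omega) ?_ ?_ ?_ ?_ <;>
    grind [longBit, junctionTile]

theorem yellow (hn : 1 ≤ n) {i : ℤ} (hi : 1 ≤ i) (hin : i ≤ n) :
    TileOccursInBlocks n (hatT (horizontalTile n 1 1 i)) := by
  refine (blue hn le_rfl hn).transpose.left_col hn i hi ?_ ?_ ?_ ?_ <;>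
    grind [longBit, hatT, horizontalTile]

theorem junction_one_zero (hn : 1 ≤ n) : TileOccursInBlocks n (junctionTile n 0 1 0 0) := by
  refine (yellow hn le_rfl hn).transpose.corner hn ?_ ?_ ?_ ?_ <;>
    grind [longBit, hatT, horizontalTile]

theorem green (hn : 1 ≤ n) {i : ℤ} (hi : 0 ≤ i) (hin : i ≤ n) :
    TileOccursInBlocks n (hatT (horizontalTile n 0 1 i)) := by
  rcases hin.eq_or_lt with rfl | hin
  · refine (junction_one_zero hn).left_col hn i hn ?_ ?_ ?_ ?_ <;> grind [longBit, junctionTile]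
  · refine (yellow hn (i := i + 1) (by omega) hin).transpose.left_col hn (i + 1) (by omega)
      ?_ ?_ ?_ ?_ <;> grind [longBit, hatT, horizontalTile]

theorem vertical (hn : 1 ≤ n) {y e i : ℤ} (hy : 0 ≤ y) (hye : y ≤ e) (he : e ≤ 1) (hyi : y ≤ i)
    (hin : i ≤ n) (hie : i < n + e) : TileOccursInBlocks n (hatT (horizontalTile n y e i)) := by
  obtain ⟨rfl, rfl⟩ | ⟨rfl, rfl⟩ | ⟨rfl, rfl⟩ :
    y = 0 ∧ e = 0 ∨ y = 0 ∧ e = 1 ∨ y = 1 ∧ e = 1 := by omega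
  · exact blue hn hyi (by omega)
  · exact green hn hyi hin
  · exact yellow hn hyi hin

theorem junction (hn : 1 ≤ n) {k l r s : ℤ} (hk : 0 ≤ k) (hkl : k ≤ l) (hl : l ≤ 1) (hr : 0 ≤ r)
    (hrs : r ≤ s) (hs : s ≤ 1) (hrl : r ≤ l) (hks : k ≤ s) :
    TileOccursInBlocks n (junctionTile n k l r s) := by
  have h1101 : TileOccursInBlocks n (junctionTile n 1 1 0 1) := by
    refine (green hn le_rfl (by omega)).corner hn ?_ ?_ ?_ ?_ <;>
      grind [longBit, hatT, horizontalTile]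
  have h0101 : TileOccursInBlocks n (junctionTile n 0 1 0 1) := by
    refine (green hn zero_le_one hn).corner hn ?_ ?_ ?_ ?_ <;>
      grind [longBit, hatT, horizontalTile]
  have h0000 : TileOccursInBlocks n (junctionTile n 0 0 0 0) := by
    refine h0101.corner hn ?_ ?_ ?_ ?_ <;> grind [longBit, junctionTile]
  obtain ⟨rfl, rfl⟩ | ⟨rfl, rfl⟩ | ⟨rfl, rfl⟩ :
    k = 0 ∧ l = 0 ∨ k = 0 ∧ l = 1 ∨ k = 1 ∧ l = 1 := by omega
  all_goals obtain ⟨rfl, rfl⟩ | ⟨rfl, rfl⟩ | ⟨rfl, rfl⟩ :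
    r = 0 ∧ s = 0 ∨ r = 0 ∧ s = 1 ∨ r = 1 ∧ s = 1 := by omega
  any_goals first | assumption | omega
  exacts [(junction_one_zero hn).transpose, junction_one_zero hn, h1101.transpose,
    junction_one_one hn]

theorem of_mem_Tmet (hn : 1 ≤ n) (ht : t ∈ Tmet n) : TileOccursInBlocks n t := by
  obtain ⟨hi, hin, hj, hjn⟩ | ⟨hy, hye, he, hyi, hin, hie⟩ | ⟨hy, hye, he, hyi, hin, hie⟩ |
    ⟨hk, hkl, hl, hr, hrs, hs, hrl, hks⟩ := mem_Tmet_iff.1 ht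
  · exact white hn hi hin hj hjn
  · exact (vertical hn hy hye he hyi hin hie).transpose
  · exact vertical hn hy hye he hyi hin hie
  · exact junction hn hk hkl hl hr hrs hs hrl hks

end TileOccursInBlocks

/-! ### Uniform recurrence -/

namespace OccursInBlocks

variable {n : ℤ} {m : ℕ} {x y : ℤ × ℤ → WangTile Lbl} {c r : ℤ → ℤ} {k k' l l' : ℤ}
  {S S' : Set (ℤ × ℤ)}

theorem mono (h : S ⊆ S') (hS' : OccursInBlocks n x S') : OccursInBlocks n x S := by
  obtain ⟨m, hm⟩ := hS'
  refine ⟨m, fun x' y c r I k l => ?_⟩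
  obtain ⟨q, hq, hx⟩ := hm _ _ _ _ I k l
  exact ⟨q, fun s hs => hq s (h hs), hx.mono h⟩

theorem cell (hn : 1 ≤ n) (hx : ValidConfig (Tmet n) x) (a b : ℤ) :
    OccursInBlocks n x (Set.Ico a (a + 1) ×ˢ Set.Ico b (b + 1)) := by
  obtain ⟨m, hm⟩ := TileOccursInBlocks.of_mem_Tmet hn (hx.1 (a, b))
  refine ⟨m, fun x' y c r I k l => ?_⟩
  obtain ⟨q, hq, hxq⟩ := hm _ _ _ _ I k l
  have hcell : ∀ s ∈ Set.Ico a (a + 1) ×ˢ Set.Ico b (b + 1), s = (a, b) := fun s hs => by grind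
  refine ⟨q - (a, b), fun s hs => ?_, fun s hs => ?_⟩
  · simpa [hcell s hs] using hq 0 rfl
  · simpa [hcell s hs, shiftConfig] using hxq rfl

theorem of_image_closure (hn : 1 ≤ n) (hm : 1 ≤ m) (I : IteratedDesubstitution n m x y c r)
    (k l : ℤ) (hS : S ⊆ Set.Icc (c k) (c (k + 1)) ×ˢ Set.Icc (r l) (r (l + 1)) \
      {(c k, r (l + 1)), (c (k + 1), r l)}) : OccursInBlocks n x S := by
  refine (cell hn I.valid' k l).of_image (a := m) hn fun x' y' c' r' I' p hp => ?_
  have htile : y (k, l) = y' (k + p.1, l + p.2) := (hp ⟨by simp, by simp⟩).symm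
  obtain ⟨hcol, hrow, -⟩ := I.eqOn_image_tile hn I' htile
  have hclosure := I.eqOn_image_closure hn hm I' htile
  refine ⟨(c' (k + p.1) - c k, r' (l + p.2) - r l), fun s hs => ?_, fun s hs => ?_⟩
  · have := I'.strictMono_col hn (show k + p.1 + 1 < k + p.1 + 2 by omega)
    have := I'.strictMono_row hn (show l + p.2 + 1 < l + p.2 + 2 by omega)
    obtain ⟨⟨h₁, h₂⟩, -⟩ := hS hs
    exact ⟨(k, l), by simp, by grind [Prod.fst_add, Prod.snd_add]⟩
  · have := hclosure (x := s - (c k, r l)) (by grind [Prod.fst_sub, Prod.snd_sub])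
    simp only [shiftConfig, Prod.fst_sub, Prod.snd_sub, sub_add_cancel] at this ⊢
    rw [this]
    congr 2 <;> omega

theorem of_image_window (hn : 1 ≤ n) (I : IteratedDesubstitution n m x y c r) (hk : k < k')
    (hl : l < l') (h : OccursInBlocks n y (Set.Ico k k' ×ˢ Set.Ico l l'))
    (hS : S ⊆ Set.Ico (c k) (c k') ×ˢ Set.Ico (r l) (r l')) : OccursInBlocks n x S := by
  refine h.of_image (a := m) hn fun x' y' c' r' I' p hp => ?_
  obtain ⟨hcol, hrow, hx⟩ := I.eqOn_image hn I' (sub_pos.2 hk) (sub_pos.2 hl) (k := k) (l := l)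
    (k' := k + p.1) (l' := l + p.2) fun s hs => by
      have := hp (x := (s.1 + k, s.2 + l)) (by grind)
      simpa [shiftConfig, add_assoc] using this.symm
  simp only [sub_add_cancel] at hx
  refine ⟨(c' (k + p.1) - c k, r' (l + p.2) - r l), fun s hs => ?_, fun s hs => ?_⟩
  · have hc := I.strictMono_col hn
    have hr := I.strictMono_row hn
    obtain ⟨i, hi, hi'⟩ := exists_le_lt_of_strictMono hc s.1
    obtain ⟨j, hj, hj'⟩ := exists_le_lt_of_strictMono hr s.2
    obtain ⟨⟨h₁, h₂⟩, h₃, h₄⟩ := hS hs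
    have hki := hc.lt_iff_lt.1 (h₁.trans_lt hi')
    have hik := hc.lt_iff_lt.1 (hi.trans_lt h₂)
    have hlj := hr.lt_iff_lt.1 (h₃.trans_lt hj')
    have hjl := hr.lt_iff_lt.1 (hj.trans_lt h₄)
    have := hcol (x := i - k) (by grind)
    have := hcol (x := i + 1 - k) (by grind)
    have := hrow (x := j - l) (by grind)
    have := hrow (x := j + 1 - l) (by grind)
    have := I'.strictMono_col hn (show i + p.1 + 1 < i + p.1 + 2 by omega)
    have := I'.strictMono_row hn (show j + p.2 + 1 < j + p.2 + 2 by omega)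
    exact ⟨(i, j), ⟨⟨by omega, hik⟩, by grind, hjl⟩, by grind [Prod.fst_add, Prod.snd_add]⟩
  · have := hx (x := s - (c k, r l)) (by grind [Prod.fst_sub, Prod.snd_sub])
    simp only [shiftConfig, Prod.fst_sub, Prod.snd_sub, sub_add_cancel] at this ⊢
    rw [this]
    congr 2 <;> omega

theorem vertical_pair (hn : 1 ≤ n) (hx : ValidConfig (Tmet n) x) (a b : ℤ) :
    OccursInBlocks n x (Set.Ico a (a + 1) ×ˢ Set.Ico b (b + 2)) := by
  obtain ⟨y, c, r, I⟩ := IteratedDesubstitution.exists_of_validConfig hn 2 hx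
  obtain ⟨k, hk, hk'⟩ := exists_le_lt_of_strictMono (I.strictMono_col hn) a
  obtain ⟨l, hl, hl'⟩ := exists_le_lt_of_strictMono (I.strictMono_row hn) b
  have hcol := I.add_two_le_col hn
  have hrow := I.transpose.add_two_le_col hn l
  by_cases hb : b + 1 < r (l + 1)
  · exact of_image_window hn I (lt_add_one k) (lt_add_one l) (cell hn I.valid' k l)
      fun s hs => by grind
  rcases hk.eq_or_lt with rfl | hk
  · refine of_image_closure hn one_le_two I (k - 1) l fun s hs => ?_
    have := hcol (k - 1)
    grind
  · refine of_image_closure hn one_le_two I k l fun s hs => ?_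
    grind

theorem horizontal_pair (hn : 1 ≤ n) (hx : ValidConfig (Tmet n) x) (a b : ℤ) :
    OccursInBlocks n x (Set.Ico a (a + 2) ×ˢ Set.Ico b (b + 1)) :=
  (vertical_pair hn (hx.transpose fun _ => hatT_mem_Tmet) b a).transpose.mono fun _ hs => hs.symm

theorem square (hn : 1 ≤ n) (hx : ValidConfig (Tmet n) x) (a b : ℤ) :
    OccursInBlocks n x (Set.Ico a (a + 2) ×ˢ Set.Ico b (b + 2)) := by
  obtain ⟨y, c, r, I⟩ := IteratedDesubstitution.exists_of_validConfig hn 2 hx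
  obtain ⟨k, hk, hk'⟩ := exists_le_lt_of_strictMono (I.strictMono_col hn) a
  obtain ⟨l, hl, hl'⟩ := exists_le_lt_of_strictMono (I.strictMono_row hn) b
  by_cases ha : a + 1 < c (k + 1)
  · refine of_image_window hn I (lt_add_one k) (by omega) (vertical_pair hn I.valid' k l)
      fun s hs => ?_
    have := I.strictMono_row hn (show l + 1 < l + 2 by omega)
    grind
  by_cases hb : b + 1 < r (l + 1)
  · refine of_image_window hn I (by omega) (lt_add_one l) (horizontal_pair hn I.valid' k l)
      fun s hs => ?_
    have := I.strictMono_col hn (show k + 1 < k + 2 by omega)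
    grind
  · refine of_image_closure hn one_le_two I k l fun s hs => ?_
    have := I.add_two_le_col hn k
    have := I.transpose.add_two_le_col hn l
    grind

theorem window (hn : 1 ≤ n) (hx : ValidConfig (Tmet n) x) (a b : ℤ) (N : ℕ) :
    OccursInBlocks n x (Set.Ico a (a + N) ×ˢ Set.Ico b (b + N)) := by
  obtain ⟨m, hm⟩ := IteratedDesubstitution.exists_forall_add_le_col hn N
  obtain ⟨y, c, r, I⟩ := IteratedDesubstitution.exists_of_validConfig hn m hx
  obtain ⟨k, hk, hk'⟩ := exists_le_lt_of_strictMono (I.strictMono_col hn) a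
  obtain ⟨l, hl, hl'⟩ := exists_le_lt_of_strictMono (I.strictMono_row hn) b
  have hcol := hm _ _ _ _ I (k + 1)
  have hrow := hm _ _ _ _ I.transpose (l + 1)
  rw [add_assoc] at hcol hrow
  exact of_image_window hn I (by omega) (by omega) (square hn I.valid' k l) fun s hs => by grind

theorem of_finite (hn : 1 ≤ n) (hx : ValidConfig (Tmet n) x) (hS : S.Finite) :
    OccursInBlocks n x S := by
  obtain ⟨a, ha⟩ := hS.bddBelow
  obtain ⟨b, hb⟩ := hS.bddAbove
  refine (window hn hx a.1 a.2 (max (b.1 - a.1 + 1) (b.2 - a.2 + 1)).toNat).mono fun s hs => ?_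
  have hle := ha hs
  have hle' := hb hs
  rw [Prod.le_def] at hle hle'
  exact ⟨⟨hle.1, by omega⟩, hle.2, by omega⟩

end OccursInBlocks

/-! ### Pattern images -/

/-- The pattern read in the configuration `x` upwards and to the right from position `p`. -/
def patternAt {C : Type*} (x : ℤ × ℤ → WangTile C) (p : ℤ × ℤ) (i j : ℕ) : WangTile C :=
  x (p.1 + i, p.2 + j)

theorem patternAt_add {C : Type*} (x : ℤ × ℤ → WangTile C) (p : ℤ × ℤ) (a b : ℕ) :
    (fun i j => patternAt x p (a + i) (b + j)) = patternAt x (p.1 + a, p.2 + b) := by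
  ext1; ext1
  simp only [patternAt, Nat.cast_add, add_assoc]

theorem ValidConfig.validPattern_patternAt {C : Type*} {T : Set (WangTile C)}
    {x : ℤ × ℤ → WangTile C} (hx : ValidConfig T x) (p : ℤ × ℤ) (w h : ℕ) :
    ValidPattern T w h (patternAt x p) := by
  refine ⟨fun i j _ _ => hx.1 _, fun i j _ _ => ?_, fun i j _ _ => ?_⟩
  · simpa [patternAt, add_assoc] using hx.2.1 (p.1 + i, p.2 + j)
  · simpa [patternAt, add_assoc] using hx.2.2 (p.1 + i, p.2 + j)

theorem tau_eq_map_letter {n : ℤ} {u : Lbl} (hu : u.1 = 0 ∨ u.1 = 1) (hu' : u.1 ≤ u.2.2)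
    (hun : u.2.2 ≤ n + 1) {N : ℕ} (hN : (N : ℤ) = n + 1 - u.1) (hN' : 0 < N) :
    tau n u = (List.range N).map fun i : ℕ => letter n u i := by
  obtain ⟨a, b, z⟩ := u
  refine List.ext_getElem ?_ fun i hi hi' => ?_
  · simp only [tau, List.length_map, List.length_range]
    grind [List.length_append, List.length_cons, List.length_replicate]
  · simp only [tau, letter, List.getElem_map, List.getElem_range]
    rcases i with - | i <;> split_ifs <;> simp only [List.getElem_cons_zero,
      List.getElem_cons_succ, List.getElem_append, List.getElem_replicate] <;> grind

theorem left_bounds_of_mem_Tmet {n : ℤ} (hn : 1 ≤ n) {t : WangTile Lbl} (h : t ∈ Tmet n) :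
    t.left.1 ≤ t.left.2.2 ∧ t.left.2.2 ≤ n + 1 := by
  obtain _ | _ | _ | _ := mem_Tmet_iff.1 h <;>
    grind [whiteTile, horizontalTile, hatT, junctionTile]

/-- The pattern `q` of size `w × h` is the image `ω_n(t)` of the tile `t`. -/
def IsTileImage (n : ℤ) (T : Set (WangTile Lbl)) (t : WangTile Lbl) (w h : ℕ)
    (q : ℕ → ℕ → WangTile Lbl) : Prop :=
  ValidPattern T w h q ∧ rightWord w h q = tau n t.right ∧ topWord w h q = tau n t.top ∧
    leftWord h q = tau n t.left ∧ bottomWord w q = tau n t.bottom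

/-- The coordinate `c (a + i)` relative to `c a`, as a natural number. -/
def blockOffset (c : ℤ → ℤ) (a : ℤ) (i : ℕ) : ℕ := (c (a + i) - c a).toNat

theorem cast_blockOffset {c : ℤ → ℤ} (hc : Monotone c) (a : ℤ) (i : ℕ) :
    (blockOffset c a i : ℤ) = c (a + i) - c a :=
  Int.toNat_of_nonneg (sub_nonneg.2 (hc (by omega)))

namespace Desubstitution

variable {n : ℤ} {x y : ℤ × ℤ → WangTile Lbl} {c r : ℤ → ℤ}

theorem leftWord_eq (hn : 1 ≤ n) (D : Desubstitution n x y c r) (k l : ℤ) {h : ℕ}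
    (hh : (h : ℤ) = r (l + 1) - r l) :
    leftWord h (patternAt x (c k, r l)) = tau n (y (k, l)).left := by
  have hu := (fst_eq_zero_or_one_of_mem_Text (Tmet_subset_Text (D.valid'.1 (k, l)))).1
  have hu' := left_bounds_of_mem_Tmet hn (D.valid'.1 (k, l))
  have hrow := D.row k l
  rw [tau_eq_map_letter hu hu'.1 hu'.2 (N := h) (by omega) (by omega)]
  refine List.map_congr_left fun j hj => ?_
  have := List.mem_range.1 hj
  simpa [patternAt] using D.left k l j (by omega) (by omega)

theorem bottomWord_eq (hn : 1 ≤ n) (D : Desubstitution n x y c r) (k l : ℤ) {w : ℕ}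
    (hw : (w : ℤ) = c (k + 1) - c k) :
    bottomWord w (patternAt x (c k, r l)) = tau n (y (k, l)).bottom :=
  D.transpose.leftWord_eq hn l k hw

theorem rightWord_eq (hn : 1 ≤ n) (D : Desubstitution n x y c r) (k l : ℤ) {w h : ℕ}
    (hw : (w : ℤ) = c (k + 1) - c k) (hh : (h : ℤ) = r (l + 1) - r l) :
    rightWord w h (patternAt x (c k, r l)) = tau n (y (k, l)).right := by
  have := D.strictMono_col hn (lt_add_one k)
  rw [D.valid'.2.1 (k, l), ← D.leftWord_eq hn (k + 1) l hh]
  refine List.map_congr_left fun j _ => ?_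
  rw [patternAt, D.valid.2.1]
  simp only [patternAt]
  congr 3
  omega

theorem topWord_eq (hn : 1 ≤ n) (D : Desubstitution n x y c r) (k l : ℤ) {w h : ℕ}
    (hw : (w : ℤ) = c (k + 1) - c k) (hh : (h : ℤ) = r (l + 1) - r l) :
    topWord w h (patternAt x (c k, r l)) = tau n (y (k, l)).top :=
  D.transpose.rightWord_eq hn l k hh hw

theorem isTileImage (hn : 1 ≤ n) (D : Desubstitution n x y c r) (k l : ℤ) {w h : ℕ}
    (hw : (w : ℤ) = c (k + 1) - c k) (hh : (h : ℤ) = r (l + 1) - r l) :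
    IsTileImage n (Tmet n) (y (k, l)) w h (patternAt x (c k, r l)) :=
  ⟨D.valid.validPattern_patternAt _ _ _, D.rightWord_eq hn k l hw hh, D.topWord_eq hn k l hw hh,
    D.leftWord_eq hn k l hh, D.bottomWord_eq hn k l hw⟩

theorem isPatternImage (hn : 1 ≤ n) (D : Desubstitution n x y c r) (a b : ℤ) (w h : ℕ) :
    IsPatternImage n (Tmet n) w h (patternAt y (a, b)) (blockOffset c a w) (blockOffset r b h)
      (patternAt x (c a, r b)) := by
  have hc := cast_blockOffset (D.strictMono_col hn).monotone a
  have hr := cast_blockOffset (D.strictMono_row hn).monotone b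
  have hc_lt (k : ℕ) := D.strictMono_col hn (lt_add_one (a + k))
  have hr_lt (l : ℕ) := D.strictMono_row hn (lt_add_one (b + l))
  refine ⟨blockOffset c a, blockOffset r b, by simp [blockOffset], by simp [blockOffset],
    rfl, rfl, fun k _ => by grind, fun l _ => by grind, fun k l _ _ => ?_⟩
  rw [patternAt_add]
  simp only [hc, hr, add_sub_cancel]
  exact D.isTileImage hn (a + k) (b + l) (by grind) (by grind)

end Desubstitution

theorem IteratedDesubstitution.iterImage {n : ℤ} (hn : 1 ≤ n) {m : ℕ} {x y : ℤ × ℤ → WangTile Lbl}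
    {c r : ℤ → ℤ} (I : IteratedDesubstitution n m x y c r) (k l : ℤ) :
    IterImage n (Tmet n) m (y (k, l)) (blockOffset c k 1) (blockOffset r l 1)
      (patternAt x (c k, r l)) := by
  induction I with
  | zero => simp [IterImage, patternAt, blockOffset]
  | @succ m x y z c r c' r' D I ih =>
    have hc := cast_blockOffset (I.strictMono_col hn).monotone k 1
    have hr := cast_blockOffset (I.strictMono_row hn).monotone l 1
    have := D.isPatternImage hn (c' k) (r' l) (blockOffset c' k 1) (blockOffset r' l 1)
    refine ⟨_, _, _, ih, ?_⟩
    convert this using 1 <;> grind [blockOffset]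

theorem exists_le_lt_of_lt {A : ℕ → ℕ} (h0 : A 0 = 0) {w i : ℕ} (hi : i < A w) :
    ∃ k < w, A k ≤ i ∧ i < A (k + 1) := by
  induction w with
  | zero => omega
  | succ w ih =>
    by_cases h : i < A w
    · obtain ⟨k, hk, hik⟩ := ih h
      exact ⟨k, hk.trans (lt_add_one w), hik⟩
    · exact ⟨w, lt_add_one w, not_lt.1 h, hi⟩

namespace IsTileImage

variable {n : ℤ} {T : Set (WangTile Lbl)} {t t' : WangTile Lbl} {w w' h h' : ℕ}
  {q q' : ℕ → ℕ → WangTile Lbl}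

theorem right_eq_left (hq : IsTileImage n T t w h q) (hq' : IsTileImage n T t' w' h q')
    (ht : t.right = t'.left) {j : ℕ} (hj : j < h) : (q (w - 1) j).right = (q' 0 j).left := by
  have := hq.2.1.trans ((congrArg (tau n) ht).trans hq'.2.2.2.1.symm)
  exact List.map_inj_left.1 this j (List.mem_range.2 hj)

theorem top_eq_bottom (hq : IsTileImage n T t w h q) (hq' : IsTileImage n T t' w h' q')
    (ht : t.top = t'.bottom) {i : ℕ} (hi : i < w) : (q i (h - 1)).top = (q' i 0).bottom := by
  have := hq.2.2.1.trans ((congrArg (tau n) ht).trans hq'.2.2.2.2.symm)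
  exact List.map_inj_left.1 this i (List.mem_range.2 hi)

end IsTileImage

namespace IsPatternImage

variable {n : ℤ} {T : Set (WangTile Lbl)} {w h w' h' : ℕ} {p q : ℕ → ℕ → WangTile Lbl}

theorem mem (hq : IsPatternImage n T w h p w' h' q) {i j : ℕ} (hi : i < w') (hj : j < h') :
    q i j ∈ T := by
  obtain ⟨A, B, hA, hB, rfl, rfl, -, -, hq⟩ := hq
  obtain ⟨k, hk, hik, hik'⟩ := exists_le_lt_of_lt hA hi
  obtain ⟨l, hl, hjl, hjl'⟩ := exists_le_lt_of_lt hB hj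
  have := (hq k l hk hl).1.1 (i - A k) (j - B l) (by omega) (by omega)
  simpa only [Nat.add_sub_cancel' hik, Nat.add_sub_cancel' hjl] using this

theorem right_eq_left (hq : IsPatternImage n T w h p w' h' q) (hp : ValidPattern T w h p)
    {i j : ℕ} (hi : i + 1 < w') (hj : j < h') : (q i j).right = (q (i + 1) j).left := by
  obtain ⟨A, B, hA, hB, rfl, rfl, -, -, hq⟩ := hq
  obtain ⟨k, hk, hik, hik'⟩ := exists_le_lt_of_lt hA (Nat.lt_of_succ_lt hi)
  obtain ⟨l, hl, hjl, hjl'⟩ := exists_le_lt_of_lt hB hj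
  rcases (Nat.succ_le_of_lt hik').eq_or_lt with heq | hlt
  · have hk' : k + 1 < w := by grind
    have := IsTileImage.right_eq_left (hq k l hk hl) (hq (k + 1) l hk' hl) (hp.2.1 k l hk' hl)
      (j := j - B l) (by omega)
    convert this using 3 <;> omega
  · have := (hq k l hk hl).1.2.1 (i - A k) (j - B l) (by omega) (by omega)
    convert this using 3 <;> omega

theorem top_eq_bottom (hq : IsPatternImage n T w h p w' h' q) (hp : ValidPattern T w h p)
    {i j : ℕ} (hi : i < w') (hj : j + 1 < h') : (q i j).top = (q i (j + 1)).bottom := by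
  obtain ⟨A, B, hA, hB, rfl, rfl, -, -, hq⟩ := hq
  obtain ⟨k, hk, hik, hik'⟩ := exists_le_lt_of_lt hA hi
  obtain ⟨l, hl, hjl, hjl'⟩ := exists_le_lt_of_lt hB (Nat.lt_of_succ_lt hj)
  rcases (Nat.succ_le_of_lt hjl').eq_or_lt with heq | hlt
  · have hl' : l + 1 < h := by grind
    have := IsTileImage.top_eq_bottom (hq k l hk hl) (hq k (l + 1) hk hl') (hp.2.2 k l hk hl')
      (i := i - A k) (by omega)
    convert this using 3 <;> omega
  · have := (hq k l hk hl).1.2.2 (i - A k) (j - B l) (by omega) (by omega)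
    convert this using 3 <;> omega

theorem validPattern (hq : IsPatternImage n T w h p w' h' q) (hp : ValidPattern T w h p) :
    ValidPattern T w' h' q :=
  ⟨fun _ _ => hq.mem, fun _ _ => hq.right_eq_left hp, fun _ _ => hq.top_eq_bottom hp⟩

end IsPatternImage

theorem IterImage.validPattern {n : ℤ} {T : Set (WangTile Lbl)} {m : ℕ} {t : WangTile Lbl}
    (ht : t ∈ T) {w h : ℕ} {q : ℕ → ℕ → WangTile Lbl} (hq : IterImage n T m t w h q) :
    ValidPattern T w h q := by
  induction m generalizing w h q with
  | zero =>
    obtain ⟨rfl, rfl, rfl⟩ := hq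
    refine ⟨fun i j hi hj => ?_, fun i j _ _ => by omega, fun i j _ _ => by omega⟩
    rwa [Nat.lt_one_iff.1 hi, Nat.lt_one_iff.1 hj]
  | succ m ih =>
    obtain ⟨w', h', p, hp, hq⟩ := hq
    exact hq.validPattern (ih hp)

theorem ValidConfig.of_validPattern_patternAt {C : Type*} {T : Set (WangTile C)}
    {x : ℤ × ℤ → WangTile C} (h : ∀ p, ValidPattern T 2 2 (patternAt x p)) : ValidConfig T x := by
  refine ⟨fun p => ?_, fun p => ?_, fun p => ?_⟩
  · simpa [patternAt] using (h p).1 0 0 two_pos two_pos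
  · simpa [patternAt] using (h p).2.1 0 0 one_lt_two two_pos
  · simpa [patternAt] using (h p).2.2 0 0 two_pos one_lt_two

theorem ValidPattern.subpattern {C : Type*} {T : Set (WangTile C)} {w h w' h' a b : ℕ}
    {p q : ℕ → ℕ → WangTile C} (hq : ValidPattern T w' h' q) (ha : a + w ≤ w') (hb : b + h ≤ h')
    (hpq : ∀ i j, i < w → j < h → q (a + i) (b + j) = p i j) : ValidPattern T w h p := by
  refine ⟨fun i j hi hj => ?_, fun i j hi hj => ?_, fun i j hi hj => ?_⟩
  · rw [← hpq i j hi hj]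
    exact hq.1 _ _ (by omega) (by omega)
  · rw [← hpq i j (by omega) hj, ← hpq (i + 1) j hi hj]
    exact hq.2.1 _ _ (by omega) (by omega)
  · rw [← hpq i j hi (by omega), ← hpq i (j + 1) hi hj]
    exact hq.2.2 _ _ (by omega) (by omega)

/-! ### Minimality and the substitutive subshift -/

/-- The pattern `p` of size `w × h` occurs in `ω_n^m(t)` for some `m` and some tile `t ∈ T`, that
is, `p` belongs to the language of the substitution. -/
def OccursInIterImage (n : ℤ) (T : Set (WangTile Lbl)) (w h : ℕ) (p : ℕ → ℕ → WangTile Lbl) :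
    Prop :=
  ∃ (m : ℕ) (t : WangTile Lbl) (wq hq : ℕ) (q : ℕ → ℕ → WangTile Lbl) (i₀ j₀ : ℕ),
    t ∈ T ∧ IterImage n T m t wq hq q ∧ i₀ + w ≤ wq ∧ j₀ + h ≤ hq ∧
      ∀ i j, i < w → j < h → q (i₀ + i) (j₀ + j) = p i j

theorem OccursInIterImage.validPattern {n : ℤ} {T : Set (WangTile Lbl)} {w h : ℕ}
    {p : ℕ → ℕ → WangTile Lbl} (hp : OccursInIterImage n T w h p) : ValidPattern T w h p := by
  obtain ⟨m, t, wq, hq, q, i₀, j₀, ht, himage, hw, hh, hqp⟩ := hp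
  exact (himage.validPattern ht).subpattern hw hh hqp

namespace ValidConfig

variable {n : ℤ} {x y : ℤ × ℤ → WangTile Lbl}

theorem occursInIterImage (hn : 1 ≤ n) (hx : ValidConfig (Tmet n) x) (w h : ℕ) (p : ℤ × ℤ) :
    OccursInIterImage n (Tmet n) w h (patternAt x p) := by
  -- The closed window is nonempty even if `w = 0` or `h = 0`, so it pins down the offsets.
  obtain ⟨m, hm⟩ := OccursInBlocks.of_finite hn hx
    ((Set.finite_Icc p.1 (p.1 + w)).prod (Set.finite_Icc p.2 (p.2 + h)))
  obtain ⟨y, c, r, I⟩ := IteratedDesubstitution.exists_of_validConfig hn m hx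
  obtain ⟨q, hq, hxq⟩ := hm _ _ _ _ I 0 0
  have hc := cast_blockOffset (I.strictMono_col hn).monotone 0 1
  have hr := cast_blockOffset (I.strictMono_row hn).monotone 0 1
  obtain ⟨⟨hc₀, -⟩, hr₀, -⟩ := hq p ⟨⟨le_rfl, by lia⟩, le_rfl, by lia⟩
  obtain ⟨⟨-, hc₁⟩, -, hr₁⟩ := hq (p.1 + w, p.2 + h) ⟨⟨by simp, le_rfl⟩, by simp, le_rfl⟩
  simp only [Prod.fst_add, Prod.snd_add] at hc₀ hc₁ hr₀ hr₁
  refine ⟨m, _, _, _, _, (p.1 + q.1 - c 0).toNat, (p.2 + q.2 - r 0).toNat, I.valid'.1 (0, 0),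
    I.iterImage hn 0 0, by grind, by grind, fun i j hi hj => ?_⟩
  rw [patternAt, patternAt, ← hxq (x := (p.1 + i, p.2 + j)) (by grind), shiftConfig]
  congr 2 <;> grind

theorem mem_closure_orbit (hn : 1 ≤ n) (hx : ValidConfig (Tmet n) x)
    (hy : ValidConfig (Tmet n) y) : y ∈ closure (Set.range fun q => shiftConfig q x) := by
  refine mem_closure_iff.2 fun o ho hyo => ?_
  obtain ⟨I, u, hu, huo⟩ := isOpen_pi_iff.1 ho y hyo
  obtain ⟨m, hm⟩ := OccursInBlocks.of_finite hn hy I.finite_toSet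
  obtain ⟨x', c, r, D⟩ := IteratedDesubstitution.exists_of_validConfig hn m hx
  obtain ⟨q, -, hq⟩ := hm _ _ _ _ D 0 0
  exact ⟨shiftConfig q x, huo fun s hs => hq hs ▸ (hu s hs).2, q, rfl⟩

end ValidConfig

/-- the Wang shift `Ω_n` is minimal and equals the substitutive subshift
`X_{ω_n}`. -/
theorem stmt19 (n : ℤ) (hn : 1 ≤ n) :
    (∀ X : Set ((ℤ × ℤ) → WangTile Lbl),
      X ⊆ {y | ValidConfig (Tmet n) y} → X.Nonempty → IsClosed X →
      (∀ k : ℤ × ℤ, ∀ y ∈ X, (fun m : ℤ × ℤ => y (m.1 + k.1, m.2 + k.2)) ∈ X) →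
      X = {y | ValidConfig (Tmet n) y}) ∧
    (∀ z : ℤ × ℤ → WangTile Lbl,
      ValidConfig (Tmet n) z ↔
      ∀ (w h : ℕ) (pos : ℤ × ℤ),
        ∃ (m : ℕ) (t : WangTile Lbl) (wq hq : ℕ) (q : ℕ → ℕ → WangTile Lbl) (i0 j0 : ℕ),
          t ∈ Tmet n ∧ IterImage n (Tmet n) m t wq hq q ∧
          i0 + w ≤ wq ∧ j0 + h ≤ hq ∧
          ∀ i j, i < w → j < h →
            q (i0 + i) (j0 + j) = z (pos.1 + i, pos.2 + j)) := by
  refine ⟨fun X hX hne hcl hinv => hX.antisymm fun y hy => ?_, fun z => ⟨fun hz w h pos => ?_,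
    fun hz => ?_⟩⟩
  · obtain ⟨x, hx⟩ := hne
    have horbit : Set.range (fun q => shiftConfig q x) ⊆ X :=
      Set.range_subset_iff.2 fun q => hinv q x hx
    exact closure_minimal horbit hcl ((hX hx).mem_closure_orbit hn hy)
  · exact hz.occursInIterImage hn w h pos
  · have hocc (p : ℤ × ℤ) : OccursInIterImage n (Tmet n) 2 2 (patternAt z p) := hz 2 2 p
    exact ValidConfig.of_validPattern_patternAt fun p => (hocc p).validPattern
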